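/- arXiv:1805.00260 — 6 statements merged into one kernel-verified Lean document; each statement's English description precedes it below -/
import Mathlib

section
/- If G is a finite bipartite graph with no isolated vertices in which every vertex has even degree, then š(G) ≤ Σ_{d ∈ D(G)} C(Δ(G)/2, d/2), where D(G) denotes the set of vertex degrees occurring in G, Δ(G) the maximum degree, and C(n,k) the binomial coefficient. -/
open SimpleGraph Finset

/-- A proper edge coloring of `G` with colors in `ℕ`: distinct edges of `G`
sharing an endpoint receive distinct colors. -/
def IsProperEdgeColoring {V : Type*} (G : SimpleGraph V) (c : Sym2 V → ℕ) : Prop :=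
  ∀ e₁ ∈ G.edgeSet, ∀ e₂ ∈ G.edgeSet, e₁ ≠ e₂ → (∃ v, v ∈ e₁ ∧ v ∈ e₂) → c e₁ ≠ c e₂

/-- The palette of a vertex `v`: the set of colors appearing on edges of `G` incident with `v`. -/
def palette {V : Type*} (G : SimpleGraph V) (c : Sym2 V → ℕ) (v : V) : Set ℕ :=
  {n | ∃ e ∈ G.edgeSet, v ∈ e ∧ c e = n}

/-- The palette index of `G`: the minimum number of distinct palettes occurring in a
proper edge coloring of `G`. -/
noncomputable def paletteIndex {V : Type*} (G : SimpleGraph V) : ℕ :=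
  sInf {k | ∃ c : Sym2 V → ℕ, IsProperEdgeColoring G c ∧ (Set.range (palette G c)).ncard = k}

namespace PalAux

lemma card_eq_mul_image {E X : Type*} [DecidableEq E] [DecidableEq X] (S : Finset E) (a : E → X)
    (k : ℕ) (ha : ∀ e ∈ S, #{f ∈ S | a f = a e} = k) : #S = #(S.image a) * k := by
  rw [Finset.card_eq_sum_card_image a S]
  rw [Finset.sum_const_nat (m := k)]
  intro x hx
  obtain ⟨e, he, rfl⟩ := Finset.mem_image.1 hx
  exact ha e he

lemma exists_matching {E X Y : Type*} [DecidableEq E] [DecidableEq X] [DecidableEq Y]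
    (S : Finset E) (a : E → X) (b : E → Y) (k : ℕ)
    (ha : ∀ e ∈ S, #{f ∈ S | a f = a e} = k + 1) (hb : ∀ e ∈ S, #{f ∈ S | b f = b e} = k + 1) :
    ∃ M ⊆ S, Set.InjOn a M ∧ Set.InjOn b M ∧ (∀ e ∈ S, ∃ m ∈ M, a m = a e) ∧
      (∀ e ∈ S, ∃ m ∈ M, b m = b e) := by
  have hall : ∀ T : Finset {x // x ∈ S.image a},
      #T ≤ #(T.biUnion fun x => ({f ∈ S | a f = x.1} : Finset E).image b) := by
    intro T
    set N := T.biUnion fun x => ({f ∈ S | a f = x.1} : Finset E).image b with hN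
    have h1 : #({f ∈ S | ∃ x ∈ T, a f = x.1} : Finset E) = #T * (k+1) := by
      have : ({f ∈ S | ∃ x ∈ T, a f = x.1} : Finset E)
          = T.biUnion fun x => ({f ∈ S | a f = x.1} : Finset E) := by
        ext f; simp; grind
      rw [this, Finset.card_biUnion]
      · apply Finset.sum_const_nat
        intro x hx
        obtain ⟨e, he, hx⟩ := Finset.mem_image.1 x.2
        rw [← hx]; exact ha e he
      · intro x _ y _ hxy
        refine Finset.disjoint_left.2 ?_
        intro f hf hf'
        simp only [Finset.mem_filter] at hf hf'
        exact hxy (Subtype.ext (hf.2.symm.trans hf'.2))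
    have h2 : #({f ∈ S | ∃ x ∈ T, a f = x.1} : Finset E) ≤ #N * (k+1) := by
      have hsub : ({f ∈ S | ∃ x ∈ T, a f = x.1} : Finset E) ⊆
          N.biUnion fun y => ({f ∈ S | b f = y} : Finset E) := by
        intro f hf
        simp only [Finset.mem_filter] at hf
        obtain ⟨hf, x, hx, hfx⟩ := hf
        simp only [Finset.mem_biUnion, Finset.mem_filter, hN, Finset.mem_image]
        exact ⟨b f, ⟨x, hx, f, ⟨hf, hfx⟩, rfl⟩, hf, rfl⟩
      refine (Finset.card_le_card hsub).trans ?_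
      apply Finset.card_biUnion_le_card_mul
      intro y hy
      simp only [Finset.mem_biUnion, Finset.mem_filter, hN, Finset.mem_image] at hy
      obtain ⟨x, hx, f, ⟨hf, hfx⟩, rfl⟩ := hy
      exact (hb f hf).le
    rw [h1] at h2
    exact Nat.le_of_mul_le_mul_right h2 (Nat.succ_pos k)
  obtain ⟨g, hg, hgm⟩ := (Finset.all_card_le_biUnion_card_iff_exists_injective _).1 hall
  have : ∀ x, ∃ f ∈ S, a f = x.1 ∧ b f = g x := by
    intro x
    obtain ⟨f, hf, hfx⟩ := Finset.mem_image.1 (hgm x)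
    simp only [Finset.mem_filter] at hf
    exact ⟨f, hf.1, hf.2, hfx⟩
  choose m hmS hma hmb using this
  have hMS : Finset.univ.image m ⊆ S := by
    intro f hf; obtain ⟨x, _, rfl⟩ := Finset.mem_image.1 hf; exact hmS x
  have hMb : Set.InjOn b (Finset.univ.image m : Finset E) := by
    intro e he f hf hef
    obtain ⟨x, _, rfl⟩ := Finset.mem_image.1 he
    obtain ⟨y, _, rfl⟩ := Finset.mem_image.1 hf
    rw [hmb, hmb] at hef
    rw [hg hef]
  refine ⟨Finset.univ.image m, hMS, ?_, hMb, ?_, ?_⟩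
  · intro e he f hf hef
    obtain ⟨x, _, rfl⟩ := Finset.mem_image.1 he
    obtain ⟨y, _, rfl⟩ := Finset.mem_image.1 hf
    rw [hma, hma] at hef
    rw [Subtype.ext hef]
  · intro e he
    exact ⟨m ⟨a e, Finset.mem_image_of_mem a he⟩, Finset.mem_image_of_mem _ (Finset.mem_univ _), hma _⟩
  · have hminj : Function.Injective m := by
      intro x y hxy
      exact Subtype.ext (by rw [← hma, ← hma, hxy])
    have hcard : #(Finset.univ.image m) = #(S.image a) := by
      rw [Finset.card_image_of_injective _ hminj]; simp
    have hab : #(S.image a) = #(S.image b) := by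
      have h1 := card_eq_mul_image S a _ ha
      have h2 := card_eq_mul_image S b _ hb
      exact Nat.eq_of_mul_eq_mul_right (Nat.succ_pos k) (h1.symm.trans h2)
    have heq : (Finset.univ.image m).image b = S.image b := by
      apply Finset.eq_of_subset_of_card_le (Finset.image_subset_image hMS)
      rw [Finset.card_image_of_injOn hMb, hcard, hab]
    intro e he
    have : b e ∈ (Finset.univ.image m).image b := heq ▸ Finset.mem_image_of_mem b he
    exact Finset.mem_image.1 this

lemma fib_sdiff {E X : Type*} [DecidableEq E] [DecidableEq X]
    (S M : Finset E) (hMS : M ⊆ S) (a : E → X) (k : ℕ)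
    (ha : ∀ e ∈ S, #{f ∈ S | a f = a e} = k + 1) (hi : Set.InjOn a M)
    (hm : ∀ e ∈ S, ∃ m ∈ M, a m = a e) :
    ∀ e ∈ S \ M, #{f ∈ S \ M | a f = a e} = k := by
  intro e he
  have heS := (Finset.mem_sdiff.1 he).1
  obtain ⟨m, hmM, hme⟩ := hm e heS
  have : ({f ∈ S \ M | a f = a e} : Finset E) = ({f ∈ S | a f = a e} : Finset E).erase m := by
    ext f
    simp only [Finset.mem_filter, Finset.mem_sdiff, Finset.mem_erase]
    constructor
    · rintro ⟨⟨h1, h2⟩, h3⟩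
      exact ⟨fun h => h2 (h ▸ hmM), h1, h3⟩
    · rintro ⟨h1, h2, h3⟩
      exact ⟨⟨h2, fun h => h1 (hi h hmM (h3.trans hme.symm))⟩, h3⟩
  rw [this, Finset.card_erase_of_mem (by simp [hMS hmM, hme]), ha e heS]
  rfl

lemma exists_coloring {E X Y : Type*} [DecidableEq E] [DecidableEq X] [DecidableEq Y]
    (a : E → X) (b : E → Y) (k : ℕ) : ∀ (S : Finset E)
    (_ : ∀ e ∈ S, #{f ∈ S | a f = a e} = k) (_ : ∀ e ∈ S, #{f ∈ S | b f = b e} = k),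
    ∃ c : E → ℕ, (∀ e ∈ S, c e < k) ∧
      (∀ e ∈ S, ∀ f ∈ S, a e = a f → c e = c f → e = f) ∧
      (∀ e ∈ S, ∀ f ∈ S, b e = b f → c e = c f → e = f) := by
  induction k with
  | zero =>
    intro S ha hb
    have : ∀ e, e ∉ S := by
      intro e he
      have := ha e he
      rw [Finset.card_eq_zero] at this
      have h2 : e ∈ ({f ∈ S | a f = a e} : Finset E) := by simp [he]
      rw [this] at h2
      simp at h2
    exact ⟨fun _ => 0, fun e he => absurd he (this e), fun e he => absurd he (this e),
      fun e he => absurd he (this e)⟩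
  | succ k ih =>
    intro S ha hb
    obtain ⟨M, hMS, hMa, hMb, hca, hcb⟩ := exists_matching S a b k ha hb
    obtain ⟨c, hc, h1, h2⟩ := ih (S \ M) (fib_sdiff S M hMS a k ha hMa hca)
      (fib_sdiff S M hMS b k hb hMb hcb)
    refine ⟨fun e => if e ∈ M then k else c e, ?_, ?_, ?_⟩
    · intro e he
      by_cases h : e ∈ M
      · simp [h]
      · simp only [h, if_false]
        have := hc e (by simp [he, h])
        omega
    · intro e he f hf hef hcc
      by_cases h : e ∈ M <;> by_cases h' : f ∈ M
      · exact hMa h h' hef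
      · have := hc f (by simp [hf, h'])
        simp [h, h'] at hcc; omega
      · have := hc e (by simp [he, h])
        simp [h, h'] at hcc; omega
      · simp only [h, h', if_false] at hcc
        exact h1 e (by simp [he, h]) f (by simp [hf, h']) hef hcc
    · intro e he f hf hef hcc
      by_cases h : e ∈ M <;> by_cases h' : f ∈ M
      · exact hMb h h' hef
      · have := hc f (by simp [hf, h'])
        simp [h, h'] at hcc; omega
      · have := hc e (by simp [he, h])
        simp [h, h'] at hcc; omega
      · simp only [h, h', if_false] at hcc
        exact h2 e (by simp [he, h]) f (by simp [hf, h']) hef hcc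

lemma exists_pairing {E : Type*} [DecidableEq E] (m : ℕ) : ∀ S : Finset E, #S = m + m →
    ∃ p : E → ℕ, (∀ e ∈ S, p e < m) ∧ ∀ e ∈ S, #{f ∈ S | p f = p e} = 2 := by
  induction m with
  | zero =>
    intro S hS
    have : S = ∅ := Finset.card_eq_zero.1 hS
    subst this
    exact ⟨fun _ => 0, by simp, by simp⟩
  | succ m ih =>
    intro S hS
    obtain ⟨T, hTS, hT⟩ := Finset.exists_subset_card_eq (s := S) (n := 2) (by omega)
    obtain ⟨p, hp, hp2⟩ := ih (S \ T) (by rw [Finset.card_sdiff_of_subset hTS]; omega)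
    refine ⟨fun e => if e ∈ T then m else p e, ?_, ?_⟩
    · intro e he
      by_cases h : e ∈ T
      · simp [h]
      · have := hp e (by simp [he, h])
        simp only [h, if_false]; omega
    · intro e he
      by_cases h : e ∈ T
      · rw [← hT]
        congr 1
        ext f
        simp only [h, if_true, Finset.mem_filter]
        constructor
        · rintro ⟨h1, h2⟩
          by_contra h3
          have := hp f (by simp [h1, h3])
          simp only [h3, if_false] at h2; omega
        · intro h1
          exact ⟨hTS h1, by simp [h1]⟩
      · rw [← hp2 e (by simp [he, h])]
        congr 1
        ext f
        have := hp e (by simp [he, h])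
        simp only [h, if_false, Finset.mem_filter, Finset.mem_sdiff]
        by_cases h3 : f ∈ T
        · simp only [h3, if_true]; simp; omega
        · simp [h3]

lemma half_card {E X : Type*} [DecidableEq E] [DecidableEq X] (S : Finset E) (a : E → X)
    (p : E → ℕ) (c : E → ℕ) (hc : ∀ e ∈ S, c e < 2) (x : X)
    (hp : ∀ e ∈ ({f ∈ S | a f = x} : Finset E), #{f ∈ ({f ∈ S | a f = x} : Finset E) | p f = p e} = 2)
    (hinj : ∀ e ∈ S, ∀ f ∈ S, a e = a f → p e = p f → c e = c f → e = f) (i : ℕ) (hi : i < 2) :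
    #{f ∈ S | a f = x ∧ c f = i} = #{f ∈ S | a f = x} / 2 := by
  have h := card_eq_mul_image _ p 2 hp
  have key : ∀ i, #{f ∈ S | a f = x ∧ c f = i} ≤ #(({f ∈ S | a f = x} : Finset E).image p) := by
    intro i
    apply Finset.card_le_card_of_injOn p
    · intro f hf
      have hf := Finset.mem_filter.1 hf
      exact Finset.mem_image_of_mem p (by simp [hf])
    · intro e he f hf hef
      have he := Finset.mem_filter.1 he
      have hf := Finset.mem_filter.1 hf
      exact hinj e he.1 f hf.1 (he.2.1.trans hf.2.1.symm) hef (he.2.2.trans hf.2.2.symm)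
  have hs : #{f ∈ S | a f = x} = #{f ∈ S | a f = x ∧ c f = 0} + #{f ∈ S | a f = x ∧ c f = 1} := by
    rw [← Finset.card_union_of_disjoint]
    · congr 1
      ext f
      simp only [Finset.mem_filter, Finset.mem_union]
      constructor
      · rintro ⟨h1, h2⟩
        have := hc f h1
        have : c f = 0 ∨ c f = 1 := by omega
        tauto
      · tauto
    · rw [Finset.disjoint_left]
      intro f hf hf'
      simp only [Finset.mem_filter] at hf hf'
      omega
  have k0 := key 0
  have k1 := key 1
  interval_cases i <;> omega

lemma even_split {E X Y : Type*} [DecidableEq E] [DecidableEq X] [DecidableEq Y]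
    (S : Finset E) (a : E → X) (b : E → Y)
    (ha : ∀ x, Even #{f ∈ S | a f = x}) (hb : ∀ x, Even #{f ∈ S | b f = x}) :
    ∃ c : E → ℕ, (∀ e ∈ S, c e < 2) ∧
      (∀ x, ∀ i < 2, #{f ∈ S | a f = x ∧ c f = i} = #{f ∈ S | a f = x} / 2) ∧
      (∀ x, ∀ i < 2, #{f ∈ S | b f = x ∧ c f = i} = #{f ∈ S | b f = x} / 2) := by
  have h1 : ∀ x, ∃ p : E → ℕ, ∀ e ∈ ({f ∈ S | a f = x} : Finset E),
      #{f ∈ ({f ∈ S | a f = x} : Finset E) | p f = p e} = 2 := by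
    intro x
    obtain ⟨m, hm⟩ := ha x
    obtain ⟨p, _, hp⟩ := exists_pairing m _ hm
    exact ⟨p, hp⟩
  have h2 : ∀ x, ∃ p : E → ℕ, ∀ e ∈ ({f ∈ S | b f = x} : Finset E),
      #{f ∈ ({f ∈ S | b f = x} : Finset E) | p f = p e} = 2 := by
    intro x
    obtain ⟨m, hm⟩ := hb x
    obtain ⟨p, _, hp⟩ := exists_pairing m _ hm
    exact ⟨p, hp⟩
  choose p hp using h1
  choose q hq using h2
  obtain ⟨c, hc, hca, hcb⟩ := exists_coloring (fun e => (a e, p (a e) e)) (fun e => (b e, q (b e) e)) 2 S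
    (by
      intro e he
      rw [← hp (a e) e (by simp [he])]
      congr 1
      ext f
      simp only [Finset.mem_filter, Prod.mk.injEq]
      constructor
      · rintro ⟨h1, h2, h3⟩
        rw [h2] at h3; exact ⟨⟨h1, h2⟩, h3⟩
      · rintro ⟨⟨h1, h2⟩, h3⟩
        rw [h2]; exact ⟨h1, rfl, h3⟩)
    (by
      intro e he
      rw [← hq (b e) e (by simp [he])]
      congr 1
      ext f
      simp only [Finset.mem_filter, Prod.mk.injEq]
      constructor
      · rintro ⟨h1, h2, h3⟩
        rw [h2] at h3; exact ⟨⟨h1, h2⟩, h3⟩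
      · rintro ⟨⟨h1, h2⟩, h3⟩
        rw [h2]; exact ⟨h1, rfl, h3⟩)
  refine ⟨c, hc, fun x i hi => ?_, fun x i hi => ?_⟩
  · -- restrict to the fibre of x
    have := half_card ({f ∈ S | a f = x} : Finset E) a (p x) c
      (fun e he => hc e (Finset.mem_filter.1 he).1) x
      (by rw [Finset.filter_filter]; simpa using hp x)
      (by
        intro e he f hf hef hpp hcc
        have he := Finset.mem_filter.1 he
        have hf := Finset.mem_filter.1 hf
        refine hca e he.1 f hf.1 ?_ hcc
        simp only [he.2, hf.2, hpp]) i hi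
    simpa [Finset.filter_filter] using this
  · have := half_card ({f ∈ S | b f = x} : Finset E) b (q x) c
      (fun e he => hc e (Finset.mem_filter.1 he).1) x
      (by rw [Finset.filter_filter]; simpa using hq x)
      (by
        intro e he f hf hef hpp hcc
        have he := Finset.mem_filter.1 he
        have hf := Finset.mem_filter.1 hf
        refine hcb e he.1 f hf.1 ?_ hcc
        simp only [he.2, hf.2, hpp]) i hi
    simpa [Finset.filter_filter] using this

/-- balanced orientation -/
lemma exists_orientation {V : Type*} [Fintype V] [DecidableEq V]
    (G : SimpleGraph V) [DecidableRel G.Adj] (C : V → Bool) (hC : ∀ u v, G.Adj u v → C u ≠ C v)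
    (heven : ∀ v : V, Even (G.degree v)) :
    ∃ A : Finset (V × V), (∀ u v, (u, v) ∈ A → G.Adj u v) ∧
      (∀ u v, G.Adj u v → (u, v) ∈ A ∨ (v, u) ∈ A) ∧
      (∀ u v, (u, v) ∈ A → (v, u) ∉ A) ∧
      (∀ v, #{e ∈ A | e.1 = v} = G.degree v / 2) ∧
      (∀ v, #{e ∈ A | e.2 = v} = G.degree v / 2) := by
  set S : Finset (V × V) := {e | G.Adj e.1 e.2 ∧ C e.1 = true} with hS
  have f1 : ∀ v, C v = true → #{e ∈ S | e.1 = v} = G.degree v := by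
    intro v hv
    rw [← G.card_neighborFinset_eq_degree]
    symm
    apply Finset.card_bij (fun w _ => (v, w))
    · intro w hw; simp at hw; simp [hS, hw, hv]
    · intro w _ w' _ h; simpa using h
    · rintro ⟨x, w⟩ hw; simp [hS] at hw; obtain ⟨⟨h, _⟩, rfl⟩ := hw; exact ⟨w, by simpa using h, rfl⟩
  have f1' : ∀ v, C v = false → ∀ e ∈ S, e.1 ≠ v := by
    rintro v hv e he rfl; simp [hS, hv] at he
  have f2 : ∀ v, C v = false → #{e ∈ S | e.2 = v} = G.degree v := by
    intro v hv
    rw [← G.card_neighborFinset_eq_degree]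
    symm
    apply Finset.card_bij (fun w _ => (w, v))
    · intro w hw
      simp at hw
      have := hC _ _ hw
      rw [hv] at this
      simp [hS, hw.symm]
      simpa using this.symm
    · intro w _ w' _ h; simpa using h
    · rintro ⟨w, x⟩ hw; simp [hS] at hw; obtain ⟨⟨h, _⟩, rfl⟩ := hw; exact ⟨w, by simpa using h.symm, rfl⟩
  have f2' : ∀ v, C v = true → ∀ e ∈ S, e.2 ≠ v := by
    rintro v hv e he rfl
    simp [hS] at he
    exact hC _ _ he.1 (he.2.trans hv.symm)
  obtain ⟨c, hc, h1, h2⟩ := even_split S Prod.fst Prod.snd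
    (by
      intro x
      cases hx : C x
      · rw [Finset.filter_eq_empty_iff.2 (f1' x hx)]; simp
      · rw [f1 x hx]; exact heven x)
    (by
      intro x
      cases hx : C x
      · rw [f2 x hx]; exact heven x
      · rw [Finset.filter_eq_empty_iff.2 (f2' x hx)]; simp)
  refine ⟨({e | (e ∈ S ∧ c e = 0) ∨ (e.swap ∈ S ∧ c e.swap = 1)} : Finset (V × V)), ?_, ?_, ?_, ?_, ?_⟩
  · intro u v h
    simp [hS] at h
    rcases h with h | h
    · exact h.1.1
    · exact h.1.1.symm
  · intro u v h
    have hne := hC _ _ h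
    simp only [Finset.mem_filter, Finset.mem_univ, true_and, Prod.swap_prod_mk]
    cases hu : C u
    · have hv : C v = true := by rw [hu] at hne; simpa using hne.symm
      have hm : (v, u) ∈ S := by simp [hS, h.symm, hv]
      have := hc _ hm
      have : c (v, u) = 0 ∨ c (v, u) = 1 := by omega
      tauto
    · have hm : (u, v) ∈ S := by simp [hS, h, hu]
      have := hc _ hm
      have : c (u, v) = 0 ∨ c (u, v) = 1 := by omega
      tauto
  · intro u v h h'
    simp only [Finset.mem_filter, Finset.mem_univ, true_and, Prod.swap_prod_mk] at h h'
    have hx : (u, v) ∈ S → (v, u) ∈ S → False := by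
      intro k1 k2
      simp [hS] at k1 k2
      exact hC _ _ k1.1 (k1.2.trans k2.2.symm)
    rcases h with h | h <;> rcases h' with h' | h'
    · exact hx h.1 h'.1
    · omega
    · omega
    · exact hx h'.1 h.1
  · intro v
    cases hv : C v
    · rw [← f2 v hv, ← h2 v 1 (by norm_num)]
      apply Finset.card_bij (fun e _ => e.swap)
      · intro e he
        simp only [Finset.mem_filter, Finset.mem_univ, true_and] at he ⊢
        obtain ⟨he | he, rfl⟩ := he
        · exact absurd rfl (f1' _ hv e he.1)
        · exact ⟨he.1, rfl, he.2⟩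
      · intro e _ f _ h; exact Prod.swap_injective h
      · intro e he
        simp only [Finset.mem_filter, Finset.mem_univ, true_and] at he ⊢
        exact ⟨e.swap, ⟨Or.inr (by simpa using ⟨he.1, he.2.2⟩), he.2.1⟩, by simp⟩
    · rw [← f1 v hv, ← h1 v 0 (by norm_num)]
      congr 1
      ext e
      simp only [Finset.mem_filter, Finset.mem_univ, true_and]
      constructor
      · rintro ⟨he | he, rfl⟩
        · exact ⟨he.1, rfl, he.2⟩
        · exact absurd rfl (f2' _ hv _ he.1)
      · tauto
  · intro v
    cases hv : C v
    · rw [← f2 v hv, ← h2 v 0 (by norm_num)]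
      congr 1
      ext e
      simp only [Finset.mem_filter, Finset.mem_univ, true_and]
      constructor
      · rintro ⟨he | he, rfl⟩
        · exact ⟨he.1, rfl, he.2⟩
        · exact absurd rfl (f1' _ hv _ he.1)
      · tauto
    · rw [← f1 v hv, ← h1 v 1 (by norm_num)]
      apply Finset.card_bij (fun e _ => e.swap)
      · intro e he
        simp only [Finset.mem_filter, Finset.mem_univ, true_and] at he ⊢
        obtain ⟨he | he, rfl⟩ := he
        · exact absurd rfl (f2' _ hv e he.1)
        · exact ⟨he.1, rfl, he.2⟩
      · intro e _ f _ h; exact Prod.swap_injective h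
      · intro e he
        simp only [Finset.mem_filter, Finset.mem_univ, true_and] at he ⊢
        exact ⟨e.swap, ⟨Or.inr (by simpa using ⟨he.1, he.2.2⟩), he.2.1⟩, by simp⟩

/-- Colouring of arcs with equal in and out colour sets. -/
lemma exists_arc_coloring {V : Type*} [Fintype V] [DecidableEq V]
    (A : Finset (V × V)) (K : ℕ) (d : V → ℕ) (hd : ∀ v, d v ≤ K)
    (h1 : ∀ v, #{e ∈ A | e.1 = v} = d v) (h2 : ∀ v, #{e ∈ A | e.2 = v} = d v) :
    ∃ (c : V × V → ℕ) (I : V → Finset ℕ), (∀ v, I v ∈ (Finset.range K).powersetCard (d v)) ∧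
      (∀ e ∈ A, ∀ f ∈ A, e.1 = f.1 → c e = c f → e = f) ∧
      (∀ e ∈ A, ∀ f ∈ A, e.2 = f.2 → c e = c f → e = f) ∧
      (∀ v, ({e ∈ A | e.1 = v} : Finset (V × V)).image c = I v) ∧
      (∀ v, ({e ∈ A | e.2 = v} : Finset (V × V)).image c = I v) := by
  set L : Finset (V × ℕ) := {e ∈ Finset.univ ×ˢ Finset.range K | e.2 < K - d e.1} with hL
  have hLc : ∀ v, #{e ∈ L | e.1 = v} = K - d v := by
    intro v
    rw [← Finset.card_range (K - d v)]
    symm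
    apply Finset.card_bij (fun j _ => (v, j))
    · intro j hj; simp at hj; simp [hL]; omega
    · intro w _ w' _ h; simpa using h
    · rintro ⟨x, j⟩ hj; simp [hL] at hj; obtain ⟨⟨_, h⟩, rfl⟩ := hj; exact ⟨j, by simpa using h, rfl⟩
  set S : Finset ((V × V) ⊕ (V × ℕ)) := A.disjSum L with hS
  let a : (V × V) ⊕ (V × ℕ) → V := Sum.elim Prod.fst Prod.fst
  let b : (V × V) ⊕ (V × ℕ) → V := Sum.elim Prod.snd Prod.fst
  have fa : ∀ v, ({f ∈ S | a f = v} : Finset _) =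
      ({e ∈ A | e.1 = v} : Finset _).disjSum ({e ∈ L | e.1 = v} : Finset _) := by
    intro v; ext f; rcases f with f | f <;> simp [hS, a]
  have fb : ∀ v, ({f ∈ S | b f = v} : Finset _) =
      ({e ∈ A | e.2 = v} : Finset _).disjSum ({e ∈ L | e.1 = v} : Finset _) := by
    intro v; ext f; rcases f with f | f <;> simp [hS, b]
  have ca : ∀ v, #{f ∈ S | a f = v} = K := by
    intro v; rw [fa, Finset.card_disjSum, h1, hLc]; have := hd v; omega
  have cb : ∀ v, #{f ∈ S | b f = v} = K := by
    intro v; rw [fb, Finset.card_disjSum, h2, hLc]; have := hd v; omega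
  obtain ⟨c, hc, ha, hb⟩ := exists_coloring a b K S (fun e _ => ca _) (fun e _ => cb _)
  have gen : ∀ (v : V) (q : V × V → V) (g : (V × V) ⊕ (V × ℕ) → V)
      (_ : ({f ∈ S | g f = v} : Finset _) =
        ({e ∈ A | q e = v} : Finset _).disjSum ({e ∈ L | e.1 = v} : Finset _))
      (_ : #{f ∈ S | g f = v} = K)
      (_ : ∀ e ∈ S, ∀ f ∈ S, g e = g f → c e = c f → e = f),
      ({e ∈ A | q e = v} : Finset (V × V)).image (fun e => c (Sum.inl e)) =
        Finset.range K \ ({e ∈ L | e.1 = v} : Finset _).image (fun e => c (Sum.inr e)) := by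
    intro v q g hf hcard hinj
    have hio : Set.InjOn c ({f ∈ S | g f = v} : Finset _) := by
      intro e he f hf hef
      have he := Finset.mem_filter.1 he
      have hf := Finset.mem_filter.1 hf
      exact hinj e he.1 f hf.1 (he.2.trans hf.2.symm) hef
    have him : ({f ∈ S | g f = v} : Finset _).image c = Finset.range K := by
      apply Finset.eq_of_subset_of_card_le
      · intro i hi
        obtain ⟨e, he, rfl⟩ := Finset.mem_image.1 hi
        exact Finset.mem_range.2 (hc e (Finset.mem_filter.1 he).1)
      · rw [Finset.card_image_of_injOn hio, hcard]; simp
    rw [← him]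
    rw [hf] at hio ⊢
    ext i
    simp only [Finset.mem_image, Finset.mem_sdiff]
    constructor
    · rintro ⟨e, he, rfl⟩
      refine ⟨⟨Sum.inl e, Finset.inl_mem_disjSum.2 he, rfl⟩, ?_⟩
      rintro ⟨l, hl, hle⟩
      have := hio (Finset.inr_mem_disjSum.2 hl) (Finset.inl_mem_disjSum.2 he) hle
      simp at this
    · rintro ⟨⟨e, he, rfl⟩, hn⟩
      rcases e with e | e
      · exact ⟨e, Finset.inl_mem_disjSum.1 he, rfl⟩
      · exact absurd ⟨e, Finset.inr_mem_disjSum.1 he, rfl⟩ hn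
  have ha' : ∀ e ∈ A, ∀ f ∈ A, e.1 = f.1 → c (Sum.inl e) = c (Sum.inl f) → e = f := by
    intro e he f hf h h'
    exact Sum.inl_injective (ha _ (Finset.inl_mem_disjSum.2 he) _ (Finset.inl_mem_disjSum.2 hf) h h')
  have hb' : ∀ e ∈ A, ∀ f ∈ A, e.2 = f.2 → c (Sum.inl e) = c (Sum.inl f) → e = f := by
    intro e he f hf h h'
    exact Sum.inl_injective (hb _ (Finset.inl_mem_disjSum.2 he) _ (Finset.inl_mem_disjSum.2 hf) h h')
  refine ⟨fun e => c (Sum.inl e), fun v => ({e ∈ A | e.1 = v} : Finset (V × V)).image (fun e => c (Sum.inl e)),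
    ?_, ha', hb', fun v => rfl, ?_⟩
  · intro v
    rw [Finset.mem_powersetCard]
    constructor
    · intro i hi
      obtain ⟨e, he, rfl⟩ := Finset.mem_image.1 hi
      exact Finset.mem_range.2 (hc _ (Finset.inl_mem_disjSum.2 (Finset.mem_filter.1 he).1))
    · rw [Finset.card_image_of_injOn, h1]
      intro e he f hf hef
      have he := Finset.mem_filter.1 he
      have hf := Finset.mem_filter.1 hf
      exact ha' e he.1 f hf.1 (he.2.trans hf.2.symm) hef
  · intro v
    rw [gen v Prod.snd b (fb v) (cb v) hb]
    exact (gen v Prod.fst a (fa v) (ca v) ha).symm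

end PalAux

/-- If `G` is an even bipartite graph (no isolated vertices), then
`š(G) ≤ ∑_{d ∈ D(G)} C(Δ(G)/2, d/2)`. -/
theorem palette_index_even_bipartite {V : Type*} [Fintype V] [DecidableEq V]
    (G : SimpleGraph V) [DecidableRel G.Adj]
    (hbip : G.Colorable 2)
    (hiso : ∀ v : V, 0 < G.degree v)
    (heven : ∀ v : V, Even (G.degree v)) :
    paletteIndex G ≤
      ∑ d ∈ Finset.univ.image (fun v => G.degree v), Nat.choose (G.maxDegree / 2) (d / 2) := by
  obtain ⟨C0⟩ := hbip
  let C : V → Bool := fun v => decide (C0 v = 0)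
  have hC : ∀ u v, G.Adj u v → C u ≠ C v := by
    intro u v h
    have := C0.valid h
    simp only [C, ne_eq, decide_eq_decide]
    omega
  obtain ⟨A, hA1, hA2, hA3, hA4, hA5⟩ := PalAux.exists_orientation G C hC heven
  obtain ⟨c, I, hI, hc1, hc2, hI1, hI2⟩ := PalAux.exists_arc_coloring A (G.maxDegree / 2)
    (fun v => G.degree v / 2) (fun v => Nat.div_le_div_right (G.degree_le_maxDegree v)) hA4 hA5
  let F : V → V → ℕ := fun u v => 2 * c (u, v) + (C u).toNat
  let col : Sym2 V → ℕ := Sym2.lift ⟨fun u v => (if (u, v) ∈ A then F u v else 0) +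
    (if (v, u) ∈ A then F v u else 0), fun u v => add_comm _ _⟩
  have hcol : ∀ u v, (u, v) ∈ A → col s(u, v) = 2 * c (u, v) + (C u).toNat := by
    intro u v h
    have h' := hA3 u v h
    simp [col, h, h', F]
  have hedge : ∀ e ∈ G.edgeSet, ∃ u v, (u, v) ∈ A ∧ e = s(u, v) ∧ C u = !(C v) := by
    intro e he
    induction e with
    | h u v =>
      rw [SimpleGraph.mem_edgeSet] at he
      rcases hA2 u v he with h | h
      · refine ⟨u, v, h, rfl, ?_⟩
        have := hC u v he
        revert this; cases C u <;> cases C v <;> simp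
      · refine ⟨v, u, h, Sym2.eq_swap, ?_⟩
        have := hC u v he
        revert this; cases C u <;> cases C v <;> simp
  have hproper : IsProperEdgeColoring G col := by
    rintro e₁ h₁ e₂ h₂ hne ⟨w, hw1, hw2⟩ heq
    obtain ⟨u, v, huv, rfl, hCuv⟩ := hedge e₁ h₁
    obtain ⟨x, y, hxy, rfl, hCxy⟩ := hedge e₂ h₂
    rw [hcol u v huv, hcol x y hxy] at heq
    have hlt : (C u).toNat < 2 := Bool.toNat_lt _
    have hlt' : (C x).toNat < 2 := Bool.toNat_lt _
    have e1 : c (u, v) = c (x, y) := by omega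
    have e2 : (C u).toNat = (C x).toNat := by omega
    have e3 : C u = C x := by revert e2; cases C u <;> cases C x <;> simp
    have key : u = x ∨ v = y := by
      rw [Sym2.mem_iff] at hw1 hw2
      rcases hw1 with rfl | rfl <;> rcases hw2 with h | h
      · exact Or.inl h
      · rw [h] at e3; rw [hCxy] at e3; revert e3; cases C y <;> simp
      · rw [← h] at e3; rw [hCuv] at e3; revert e3; cases C w <;> simp
      · exact Or.inr h
    rcases key with h | h
    · have := hc1 _ huv _ hxy h e1
      rw [Prod.mk.injEq] at this
      exact hne (by rw [this.1, this.2])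
    · have := hc2 _ huv _ hxy h e1
      rw [Prod.mk.injEq] at this
      exact hne (by rw [this.1, this.2])
  have hpal : ∀ v, palette G col v = {n | n / 2 ∈ I v} := by
    intro v
    ext n
    simp only [palette, Set.mem_ofPred_eq]
    constructor
    · rintro ⟨e, he, hve, rfl⟩
      obtain ⟨x, y, hxy, rfl, hCxy⟩ := hedge e he
      have hlt : (C x).toNat < 2 := Bool.toNat_lt _
      have hd : col s(x, y) / 2 = c (x, y) := by rw [hcol x y hxy]; omega
      rw [hd]
      rcases Sym2.mem_iff.1 hve with rfl | rfl
      · rw [← hI1]; exact Finset.mem_image_of_mem c (by simp [hxy])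
      · rw [← hI2]; exact Finset.mem_image_of_mem c (by simp [hxy])
    · intro hn
      have hn1 := hn
      have hn2 := hn
      rw [← hI1] at hn1
      rw [← hI2] at hn2
      obtain ⟨⟨v', w⟩, h1', h2⟩ := Finset.mem_image.1 hn1
      obtain ⟨h1, h6⟩ := Finset.mem_filter.1 h1'
      obtain ⟨⟨w', v''⟩, h3', h4⟩ := Finset.mem_image.1 hn2
      obtain ⟨h3, h5⟩ := Finset.mem_filter.1 h3'
      have h5 : v'' = v := h5
      have h6 : v' = v := h6
      subst h5
      subst h6
      by_cases hp : n % 2 = (C v').toNat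
      · refine ⟨s(v', w), hA1 _ _ h1, by simp, ?_⟩
        rw [hcol _ _ h1]; omega
      · refine ⟨s(w', v'), hA1 _ _ h3, by simp, ?_⟩
        rw [hcol _ _ h3]
        have := hC _ _ (hA1 _ _ h3)
        have : (C w').toNat + (C v').toNat = 1 := by
          revert this; cases C w' <;> cases C v' <;> simp
        omega
  have hle : paletteIndex G ≤ (Set.range (palette G col)).ncard :=
    Nat.sInf_le (Set.mem_ofPred_eq ▸ ⟨col, hproper, rfl⟩)
  refine hle.trans ?_
  let U : Finset (Finset ℕ) := (Finset.univ.image (fun v => G.degree v)).biUnion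
    (fun d => (Finset.range (G.maxDegree / 2)).powersetCard (d / 2))
  have hsub : Set.range (palette G col) ⊆ (fun J : Finset ℕ => {n : ℕ | n / 2 ∈ J}) '' (U : Set (Finset ℕ)) := by
    rintro _ ⟨v, rfl⟩
    refine ⟨I v, ?_, (hpal v).symm⟩
    simp only [U, Finset.mem_coe, Finset.mem_biUnion]
    exact ⟨G.degree v, Finset.mem_image_of_mem _ (Finset.mem_univ v), hI v⟩
  calc (Set.range (palette G col)).ncard
      ≤ ((fun J : Finset ℕ => {n : ℕ | n / 2 ∈ J}) '' (U : Set (Finset ℕ))).ncard :=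
        Set.ncard_le_ncard hsub (U.finite_toSet.image _)
    _ ≤ (U : Set (Finset ℕ)).ncard := Set.ncard_image_le U.finite_toSet
    _ = #U := Set.ncard_coe_finset U
    _ ≤ ∑ d ∈ Finset.univ.image (fun v => G.degree v),
          #((Finset.range (G.maxDegree / 2)).powersetCard (d / 2)) := Finset.card_biUnion_le
    _ = _ := by simp [Finset.card_powersetCard]
end

section
/- If G is a finite bipartite graph with no isolated vertices, then š(G) ≤ Σ_{d ∈ D^odd(G)} C(⌈Δ(G)/2⌉, (d+1)/2)·(d+1) + Σ_{d ∈ D^even(G)} C(⌈Δ(G)/2⌉, d/2), where D^odd(G) and D^even(G) denote respectively the sets of odd and even vertex degrees occurring in G, Δ(G) the maximum degree, and C(n,k) the binomial coefficient. -/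
open SimpleGraph Finset

theorem konig_reg {E W : Type*} [Fintype W] [DecidableEq W] [DecidableEq E] (l r : E → W) (k : ℕ) :
    ∀ s : Finset E, (∀ w, #{e ∈ s | l e = w} = k) → (∀ w, #{e ∈ s | r e = w} = k) →
    ∃ c : E → ℕ, (∀ e ∈ s, c e < k) ∧
      ∀ e ∈ s, ∀ e' ∈ s, c e = c e' → (l e = l e' ∨ r e = r e') → e = e' := by
  induction k with
  | zero =>
    intro s hl _
    have : s = ∅ := by
      by_contra h
      obtain ⟨e, he⟩ := Finset.nonempty_iff_ne_empty.mpr h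
      have := hl (l e)
      rw [Finset.card_eq_zero] at this
      have h2 : e ∈ ({e' ∈ s | l e' = l e} : Finset E) := by simp [he]
      rw [this] at h2
      simp at h2
    subst this
    exact ⟨fun _ => 0, by simp, by simp⟩
  | succ k ih =>
    intro s hl hr
    have hall : ∀ S : Finset W, #S ≤ #(S.biUnion (fun w => ({e ∈ s | l e = w} : Finset E).image r)) := by
      intro S
      set N := S.biUnion (fun w => ({e ∈ s | l e = w} : Finset E).image r) with hN
      have h1 : #({e ∈ s | l e ∈ S} : Finset E) = #S * (k+1) := by
        rw [Finset.card_eq_sum_card_fiberwise (f := l) (t := S) (by intro e he; simp at he; exact he.2)]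
        rw [Finset.sum_const_nat]
        intro w hw
        rw [← hl w]
        congr 1
        ext e; simp; grind
      have h2 : #({e ∈ s | r e ∈ N} : Finset E) = #N * (k+1) := by
        rw [Finset.card_eq_sum_card_fiberwise (f := r) (t := N) (by intro e he; simp only [Finset.coe_filter, Set.mem_ofPred_eq] at he; exact he.2)]
        rw [Finset.sum_const_nat]
        intro w hw
        rw [← hr w]
        congr 1
        ext e; simp only [Finset.mem_filter]; grind
      have h3 : #({e ∈ s | l e ∈ S} : Finset E) ≤ #({e ∈ s | r e ∈ N} : Finset E) := by
        apply Finset.card_le_card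
        intro e he
        simp only [Finset.mem_filter] at he ⊢
        refine ⟨he.1, ?_⟩
        rw [hN, Finset.mem_biUnion]
        exact ⟨l e, he.2, Finset.mem_image_of_mem _ (by simp [he.1])⟩
      rw [h1, h2] at h3
      exact Nat.le_of_mul_le_mul_right h3 (Nat.succ_pos k)
    obtain ⟨f, finj, hf⟩ := (Finset.all_card_le_biUnion_card_iff_exists_injective _).mp hall
    have hf' : ∀ w, ∃ e, e ∈ s ∧ l e = w ∧ r e = f w := by
      intro w
      have := hf w
      simp only [Finset.mem_image, Finset.mem_filter] at this
      obtain ⟨e, ⟨h1, h2⟩, h3⟩ := this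
      exact ⟨e, h1, h2, h3⟩
    choose m ms ml mr using hf'
    have fsurj : Function.Surjective f := Finite.injective_iff_surjective.mp finj
    obtain ⟨c, c1, c2⟩ := ih (s \ Finset.univ.image m) (by
      intro w
      have : ({e ∈ s \ Finset.univ.image m | l e = w} : Finset E) = ({e ∈ s | l e = w} : Finset E).erase (m w) := by
        ext e
        simp only [Finset.mem_filter, Finset.mem_sdiff, Finset.mem_image, Finset.mem_univ, true_and, Finset.mem_erase]
        grind
      rw [this, Finset.card_erase_of_mem (by simp [ms, ml]), hl]; rfl) (by
      intro w
      obtain ⟨u, rfl⟩ := fsurj w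
      have : ({e ∈ s \ Finset.univ.image m | r e = f u} : Finset E) = ({e ∈ s | r e = f u} : Finset E).erase (m u) := by
        ext e
        simp only [Finset.mem_filter, Finset.mem_sdiff, Finset.mem_image, Finset.mem_univ, true_and, Finset.mem_erase]
        constructor
        · grind
        · rintro ⟨h1, h2, h3⟩
          refine ⟨⟨h2, ?_⟩, h3⟩
          rintro ⟨x, rfl⟩
          rw [mr] at h3
          exact h1 (by rw [finj h3])
      rw [this, Finset.card_erase_of_mem (by simp [ms, mr]), hr]; rfl)
    refine ⟨fun e => if e ∈ Finset.univ.image m then k else c e, ?_, ?_⟩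
    · intro e he
      by_cases h : e ∈ Finset.univ.image m
      · simp only [h, if_true]; omega
      · simp only [h, if_false]
        have := c1 e (by simp only [Finset.mem_sdiff]; exact ⟨he, h⟩)
        omega
    · intro e he e' he' hc hor
      by_cases h : e ∈ Finset.univ.image m <;> by_cases h' : e' ∈ Finset.univ.image m <;>
        simp only [h, h', if_true, if_false] at hc
      · simp only [Finset.mem_image, Finset.mem_univ, true_and] at h h'
        obtain ⟨x, rfl⟩ := h
        obtain ⟨y, rfl⟩ := h'
        rw [ml, ml, mr, mr] at hor
        rcases hor with h | h
        · rw [h]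
        · rw [finj h]
      · have := c1 e' (by simp only [Finset.mem_sdiff]; exact ⟨he', h'⟩)
        omega
      · have := c1 e (by simp only [Finset.mem_sdiff]; exact ⟨he, h⟩)
        omega
      · exact c2 e (by simp only [Finset.mem_sdiff]; exact ⟨he, h⟩) e'
          (by simp only [Finset.mem_sdiff]; exact ⟨he', h'⟩) hc hor

theorem card_filter_sum {α β : Type*} [Fintype α] [Fintype β] (p : α ⊕ β → Prop) [DecidablePred p] :
    #{x | p x} = #{a | p (Sum.inl a)} + #{b | p (Sum.inr b)} := by
  rw [← Fintype.card_subtype, ← Fintype.card_subtype, ← Fintype.card_subtype,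
    Fintype.card_congr (Equiv.subtypeSum), Fintype.card_sum]

theorem card_split {α β : Type*} [Fintype α] [Fintype β] (p : α ⊕ β → Prop) [DecidablePred p]
    (q : α → Prop) [DecidablePred q] (q' : β → Prop) [DecidablePred q']
    (h : ∀ a, p (Sum.inl a) ↔ q a) (h' : ∀ b, p (Sum.inr b) ↔ q' b) :
    #{x | p x} = #{a | q a} + #{b | q' b} := by
  rw [card_filter_sum]
  congr 2
  · ext e; simp [h]
  · ext e; simp [h']

theorem card_split3 {α β γ : Type*} [Fintype α] [Fintype β] [Fintype γ]
    (p : (α ⊕ β) ⊕ γ → Prop) [DecidablePred p]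
    (q : α → Prop) [DecidablePred q] (q' : β → Prop) [DecidablePred q']
    (q'' : γ → Prop) [DecidablePred q'']
    (h : ∀ a, p (Sum.inl (Sum.inl a)) ↔ q a) (h' : ∀ b, p (Sum.inl (Sum.inr b)) ↔ q' b)
    (h'' : ∀ b, p (Sum.inr b) ↔ q'' b) :
    #{x | p x} = #{a | q a} + #{b | q' b} + #{c | q'' c} := by
  rw [card_split p (fun x => p (Sum.inl x)) q'' (fun _ => Iff.rfl) h'', card_split _ q q' h h']

theorem card_filter_sigma {W : Type*} [Fintype W] [DecidableEq W] (n : W → ℕ) (w : W) :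
    #{x : (Σ w, Fin (n w)) | x.1 = w} = n w := by
  have : ({x : (Σ w, Fin (n w)) | x.1 = w} : Finset _) =
      (Finset.univ : Finset (Fin (n w))).map (Function.Embedding.sigmaMk w) := by
    ext ⟨x, y⟩
    simp only [Finset.mem_filter, Finset.mem_univ, true_and, Finset.mem_map, Function.Embedding.sigmaMk_apply]
    constructor
    · rintro rfl
      exact ⟨y, rfl⟩
    · rintro ⟨z, hz⟩
      cases hz; rfl
  rw [this, Finset.card_map, Finset.card_univ, Fintype.card_fin]

theorem konig {E A B : Type*} [Fintype E] [Fintype A] [Fintype B] [DecidableEq A]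
    [DecidableEq B] (a : E → A) (b : E → B) (k : ℕ) (ha : ∀ x, #{e | a e = x} ≤ k)
    (hb : ∀ x, #{e | b e = x} ≤ k) :
    ∃ c : E → ℕ, (∀ e, c e < k) ∧
      ∀ e e', c e = c e' → (a e = a e' ∨ b e = b e') → e = e' := by
  classical
  let n : A ⊕ B → ℕ := Sum.elim (fun x => k - #{e | a e = x}) (fun x => k - #{e | b e = x})
  let l : (E ⊕ E) ⊕ (Σ w, Fin (n w)) → A ⊕ B :=
    Sum.elim (Sum.elim (fun e => Sum.inl (a e)) (fun e => Sum.inr (b e))) (fun x => x.1)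
  let r : (E ⊕ E) ⊕ (Σ w, Fin (n w)) → A ⊕ B :=
    Sum.elim (Sum.elim (fun e => Sum.inr (b e)) (fun e => Sum.inl (a e))) (fun x => x.1)
  obtain ⟨c, c1, c2⟩ := konig_reg l r k Finset.univ (by
    rintro (w | w)
    · rw [card_split3 _ (fun e => a e = w) (fun _ => False) (fun x => x.1 = Sum.inl w)
        (by simp [l]) (by simp [l]) (by simp [l]), card_filter_sigma]
      have := ha w
      simp [n]; omega
    · rw [card_split3 _ (fun _ => False) (fun e => b e = w) (fun x => x.1 = Sum.inr w)
        (by simp [l]) (by simp [l]) (by simp [l]), card_filter_sigma]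
      have := hb w
      simp [n]; omega) (by
    rintro (w | w)
    · rw [card_split3 _ (fun _ => False) (fun e => a e = w) (fun x => x.1 = Sum.inl w)
        (by simp [r]) (by simp [r]) (by simp [r]), card_filter_sigma]
      have := ha w
      simp [n]; omega
    · rw [card_split3 _ (fun e => b e = w) (fun _ => False) (fun x => x.1 = Sum.inr w)
        (by simp [r]) (by simp [r]) (by simp [r]), card_filter_sigma]
      have := hb w
      simp [n]; omega)
  refine ⟨fun e => c (Sum.inl (Sum.inl e)), fun e => c1 _ (Finset.mem_univ _), ?_⟩
  intro e e' h hor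
  have := c2 _ (Finset.mem_univ _) _ (Finset.mem_univ _) h (by
    rcases hor with h | h
    · left; simp [l, h]
    · right; simp [r, h])
  simpa using this

theorem exists_rank {E A : Type*} [Fintype E] [DecidableEq A] (a : E → A) :
    ∃ ρ : E → ℕ, (∀ e, ρ e < #{e' | a e' = a e}) ∧ ∀ e e', a e = a e' → ρ e = ρ e' → e = e' := by
  classical
  have h : ∀ x : A, ∃ f : E → ℕ, (∀ e, a e = x → f e < #{e' | a e' = x}) ∧
      ∀ e e', a e = x → a e' = x → f e = f e' → e = e' := by
    intro x
    let φ := ({e' | a e' = x} : Finset E).equivFin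
    refine ⟨fun e => if h : a e = x then φ ⟨e, by simp [h]⟩ else 0, ?_, ?_⟩
    · intro e he
      simp only [he, dif_pos]
      exact Fin.is_lt _
    · intro e e' he he' h
      simp only [he, he', dif_pos] at h
      have := φ.injective (Fin.ext h)
      simpa using this
  choose f h1 h2 using h
  exact ⟨fun e => f (a e) e, fun e => h1 _ e rfl, fun e e' h h' => h2 (a e) e e' rfl h.symm (by
    simp only at h'; rw [h']; rw [h])⟩

theorem halves_le {E A : Type*} [Fintype E] [DecidableEq A] (a : E → A) (ρ : E → ℕ)
    (h1 : ∀ e, ρ e < #{e' | a e' = a e}) (c : E → ℕ)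
    (hc : ∀ e e', c e = c e' → (a e, ρ e / 2) = (a e', ρ e' / 2) → e = e') (x : A) (i : ℕ) :
    #{e | a e = x ∧ c e = i} ≤ (#{e | a e = x} + 1) / 2 := by
  rw [← Finset.card_range ((#{e | a e = x} + 1) / 2)]
  apply Finset.card_le_card_of_injOn (fun e => ρ e / 2)
  · intro e he
    simp only [Finset.coe_filter, Finset.mem_univ, true_and, Set.mem_ofPred_eq] at he
    have := h1 e
    rw [he.1] at this
    simp only [Finset.coe_range, Set.mem_Iio]
    omega
  · intro e he e' he' h
    simp only [Finset.coe_filter, Finset.mem_univ, true_and, Set.mem_ofPred_eq] at he he' h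
    exact hc e e' (by rw [he.2, he'.2]) (by rw [he.1, he'.1, h])

theorem pair_le {E A : Type*} [Fintype E] [DecidableEq A] (a : E → A) (ρ : E → ℕ)
    (h2 : ∀ e e', a e = a e' → ρ e = ρ e' → e = e') (y : A × ℕ) :
    #{e | (a e, ρ e / 2) = y} ≤ 2 := by
  rw [← Finset.card_range 2]
  apply Finset.card_le_card_of_injOn (fun e => ρ e % 2)
  · intro e _
    simp only [Finset.coe_range, Set.mem_Iio]
    omega
  · intro e he e' he' h
    simp only [Finset.coe_filter, Finset.mem_univ, true_and, Set.mem_ofPred_eq] at he he' h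
    have := he.trans he'.symm
    simp only [Prod.mk.injEq] at this
    have t2 : ρ e / 2 = ρ e' / 2 := this.2
    have h : ρ e % 2 = ρ e' % 2 := h
    exact h2 e e' this.1 (by clear this he he'; omega)

/-- Version of König with arbitrary (possibly infinite) vertex types. -/
theorem konig' {E A B : Type*} [Fintype E] [DecidableEq A]
    [DecidableEq B] (a : E → A) (b : E → B) (k : ℕ) (ha : ∀ x, #{e | a e = x} ≤ k)
    (hb : ∀ x, #{e | b e = x} ≤ k) :
    ∃ c : E → ℕ, (∀ e, c e < k) ∧
      ∀ e e', c e = c e' → (a e = a e' ∨ b e = b e') → e = e' := by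
  classical
  obtain ⟨c, c1, c2⟩ := konig (fun e => (⟨a e, by simp⟩ : Finset.univ.image a))
    (fun e => (⟨b e, by simp⟩ : Finset.univ.image b)) k
    (by rintro ⟨x, hx⟩; simpa using ha x) (by rintro ⟨x, hx⟩; simpa using hb x)
  refine ⟨c, c1, fun e e' h h' => c2 e e' h ?_⟩
  simpa using h'

theorem balanced {E A B : Type*} [Fintype E] [DecidableEq A]
    [DecidableEq B] (a : E → A) (b : E → B) :
    ∃ c : E → ℕ, (∀ e, c e < 2) ∧ (∀ x i, #{e | a e = x ∧ c e = i} ≤ (#{e | a e = x} + 1) / 2) ∧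
      (∀ x i, #{e | b e = x ∧ c e = i} ≤ (#{e | b e = x} + 1) / 2) := by
  obtain ⟨ρ, r1, r2⟩ := exists_rank a
  obtain ⟨σ, s1, s2⟩ := exists_rank b
  obtain ⟨c, c1, c2⟩ := konig' (fun e => (a e, ρ e / 2)) (fun e => (b e, σ e / 2)) 2
    (pair_le a ρ r2) (pair_le b σ s2)
  exact ⟨c, c1, halves_le a ρ r1 c (fun e e' h h' => c2 e e' h (Or.inl h')),
    halves_le b σ s1 c (fun e e' h h' => c2 e e' h (Or.inr h'))⟩

theorem two_le {E A : Type*} [Fintype E] [DecidableEq A] (a : E → A) (g o : E → ℕ)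
    (ho : ∀ e, o e < 2)
    (h : ∀ e e', a e = a e' → g e = g e' → o e = o e' → e = e') (y : A × ℕ) :
    #{e | (a e, g e) = y} ≤ 2 := by
  rw [← Finset.card_range 2]
  apply Finset.card_le_card_of_injOn o
  · intro e _
    simpa using ho e
  · intro e he e' he' h'
    simp only [Finset.coe_filter, Finset.mem_univ, true_and, Set.mem_ofPred_eq] at he he' h'
    have := he.trans he'.symm
    simp only [Prod.mk.injEq] at this
    exact h e e' this.1 this.2 h'

theorem core {E A B : Type*} [Fintype E] [Fintype A] [Fintype B] [DecidableEq A]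
    [DecidableEq B] (a : E → A) (b : E → B) (k : ℕ) (ha : ∀ x, (#{e | a e = x} + 1) / 2 ≤ k)
    (hb : ∀ x, (#{e | b e = x} + 1) / 2 ≤ k) :
    ∃ c : E → ℕ, (∀ e e', c e = c e' → (a e = a e' ∨ b e = b e') → e = e') ∧
      (∀ x, ∃ T ⊆ Finset.range k, #T = (#{e | a e = x} + 1) / 2 ∧ ∀ e, a e = x → c e / 2 ∈ T) ∧
      (∀ x, ∃ T ⊆ Finset.range k, #T = (#{e | b e = x} + 1) / 2 ∧ ∀ e, b e = x → c e / 2 ∈ T) := by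
  classical
  obtain ⟨o, o1, oa, ob⟩ := balanced a b
  let n : A ⊕ B → ℕ := Sum.elim (fun x => k - (#{e | a e = x} + 1) / 2)
    (fun x => k - (#{e | b e = x} + 1) / 2)
  let l : E ⊕ (Σ w, Fin (n w)) → A ⊕ B :=
    Sum.elim (fun e => if o e = 0 then Sum.inl (a e) else Sum.inr (b e)) (fun x => x.1)
  let r : E ⊕ (Σ w, Fin (n w)) → A ⊕ B :=
    Sum.elim (fun e => if o e = 0 then Sum.inr (b e) else Sum.inl (a e)) (fun x => x.1)
  have o2 : ∀ e, o e = 0 ∨ o e = 1 := fun e => by have := o1 e; omega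
  obtain ⟨c, c1, c2⟩ := konig' l r k (by
    rintro (w | w)
    · rw [card_split _ (fun e => a e = w ∧ o e = 0) (fun x => x.1 = Sum.inl w) (by
        intro e; rcases o2 e with h | h <;> simp [l, h]) (by simp [l]), card_filter_sigma]
      have := ha w
      have := oa w 0
      simp only [n, Sum.elim_inl]; omega
    · rw [card_split _ (fun e => b e = w ∧ o e = 1) (fun x => x.1 = Sum.inr w) (by
        intro e; rcases o2 e with h | h <;> simp [l, h]) (by simp [l]), card_filter_sigma]
      have := hb w
      have := ob w 1
      simp only [n, Sum.elim_inr]; omega) (by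
    rintro (w | w)
    · rw [card_split _ (fun e => a e = w ∧ o e = 1) (fun x => x.1 = Sum.inl w) (by
        intro e; rcases o2 e with h | h <;> simp [r, h]) (by simp [r]), card_filter_sigma]
      have := ha w
      have := oa w 1
      simp only [n, Sum.elim_inl]; omega
    · rw [card_split _ (fun e => b e = w ∧ o e = 0) (fun x => x.1 = Sum.inr w) (by
        intro e; rcases o2 e with h | h <;> simp [r, h]) (by simp [r]), card_filter_sigma]
      have := hb w
      have := ob w 0
      simp only [n, Sum.elim_inr]; omega)
  let g : E → ℕ := fun e => c (Sum.inl e)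
  have ga : ∀ e e', a e = a e' → g e = g e' → o e = o e' → e = e' := by
    intro e e' h1 h2 h3
    have := c2 (Sum.inl e) (Sum.inl e') h2 (by
      rcases o2 e with h | h
      · left; simp [l, h, ← h3, h1]
      · right; simp [r, h, ← h3, h1])
    simpa using this
  have gb : ∀ e e', b e = b e' → g e = g e' → o e = o e' → e = e' := by
    intro e e' h1 h2 h3
    have := c2 (Sum.inl e) (Sum.inl e') h2 (by
      rcases o2 e with h | h
      · right; simp [r, h, ← h3, h1]
      · left; simp [l, h, ← h3, h1])
    simpa using this
  obtain ⟨h, h1, h2⟩ := konig' (fun e => (a e, g e)) (fun e => (b e, g e)) 2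
    (two_le a g o o1 ga) (two_le b g o o1 gb)
  let T : A ⊕ B → Finset ℕ := fun w =>
    Finset.range k \ Finset.univ.image (fun i : Fin (n w) => c (Sum.inr ⟨w, i⟩))
  have Tcard : ∀ w, #(T w) = k - n w := by
    intro w
    rw [Finset.card_sdiff_of_subset, Finset.card_image_of_injective, Finset.card_range, Finset.card_univ,
      Fintype.card_fin]
    · intro i j hij
      have := c2 _ _ hij (Or.inl (by simp [l]))
      simpa using this
    · intro x hx
      simp only [Finset.mem_image, Finset.mem_univ, true_and] at hx
      obtain ⟨i, rfl⟩ := hx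
      simpa using c1 _
  have hT : ∀ e w, (l (Sum.inl e) = w ∨ r (Sum.inl e) = w) → g e ∈ T w := by
    intro e w hw
    simp only [T, Finset.mem_sdiff, Finset.mem_range, Finset.mem_image, Finset.mem_univ, true_and]
    refine ⟨c1 _, ?_⟩
    rintro ⟨i, hi⟩
    have := c2 _ _ hi (by
      rcases hw with hw | hw
      · left; rw [hw]; simp [l]
      · right; rw [hw]; simp [r])
    simp at this
  have hdiv : ∀ e, (2 * g e + h e) / 2 = g e := fun e => by have := h1 e; omega
  refine ⟨fun e => 2 * g e + h e, ?_, ?_, ?_⟩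
  · intro e e' he hor
    have e1 := h1 e
    have e2 := h1 e'
    simp only at he
    have e3 : g e = g e' := by omega
    have e4 : h e = h e' := by omega
    exact h2 e e' e4 (by simpa [e3] using hor)
  · intro x
    refine ⟨T (Sum.inl x), Finset.sdiff_subset, ?_, ?_⟩
    · rw [Tcard]; have := ha x; simp only [n, Sum.elim_inl]; omega
    · intro e he
      rw [hdiv]
      apply hT
      rcases o2 e with h | h
      · left; simp [l, h, he]
      · right; simp [r, h, he]
  · intro x
    refine ⟨T (Sum.inr x), Finset.sdiff_subset, ?_, ?_⟩
    · rw [Tcard]; have := hb x; simp only [n, Sum.elim_inr]; omega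
    · intro e he
      rw [hdiv]
      apply hT
      rcases o2 e with h | h
      · right; simp [r, h, he]
      · left; simp [l, h, he]

/-- doubling of a set of classes -/
def dbl (T : Finset ℕ) : Finset ℕ := (T ×ˢ Finset.range 2).image (fun p => 2 * p.1 + p.2)

theorem mem_dbl (T : Finset ℕ) (n : ℕ) : n ∈ dbl T ↔ n / 2 ∈ T := by
  simp only [dbl, Finset.mem_image, Finset.mem_product, Finset.mem_range, Prod.exists]
  constructor
  · rintro ⟨x, y, ⟨h1, h2⟩, rfl⟩
    rwa [show (2 * x + y) / 2 = x by omega]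
  · intro h
    exact ⟨n / 2, n % 2, ⟨h, by omega⟩, by omega⟩

theorem card_dbl (T : Finset ℕ) : #(dbl T) = 2 * #T := by
  rw [dbl, Finset.card_image_of_injOn, Finset.card_product, Finset.card_range, mul_comm]
  rintro ⟨x, y⟩ h ⟨x', y'⟩ h' heq
  simp only [Finset.coe_product, Set.mem_prod, Finset.mem_coe, Finset.coe_range, Set.mem_Iio] at h h' heq
  rw [Prod.mk.injEq]
  omega

/-- candidate palettes of size `d` -/
def cand (k d : ℕ) : Finset (Finset ℕ) :=
  if Even d then (Finset.powersetCard (d / 2) (Finset.range k)).image dbl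
  else (Finset.powersetCard ((d + 1) / 2) (Finset.range k)).biUnion
    (fun T => (dbl T).image (fun x => (dbl T).erase x))

theorem card_cand_even (k d : ℕ) (h : Even d) : #(cand k d) ≤ k.choose (d / 2) := by
  rw [cand, if_pos h]
  refine Finset.card_image_le.trans ?_
  simp

theorem card_cand_odd (k d : ℕ) (h : Odd d) :
    #(cand k d) ≤ k.choose ((d + 1) / 2) * (d + 1) := by
  rw [cand, if_neg (by simpa using h)]
  refine (Finset.card_biUnion_le_card_mul _ _ (d + 1) ?_).trans ?_
  · intro T hT
    refine Finset.card_image_le.trans ?_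
    rw [card_dbl, (Finset.mem_powersetCard.mp hT).2]
    omega
  · simp

theorem mem_cand (k : ℕ) (P T : Finset ℕ) (hT : T ⊆ Finset.range k) (hc : #T = (#P + 1) / 2)
    (hP : P ⊆ dbl T) : P ∈ cand k #P := by
  have hd := card_dbl T
  by_cases h : Even #P
  · rw [cand, if_pos h]
    rw [Finset.mem_image]
    have h' := Nat.even_iff.mp h
    refine ⟨T, Finset.mem_powersetCard.mpr ⟨hT, by omega⟩, ?_⟩
    exact (Finset.eq_of_subset_of_card_le hP (by omega)).symm
  · rw [cand, if_neg h, Finset.mem_biUnion]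
    have h' := Nat.not_even_iff.mp h
    refine ⟨T, Finset.mem_powersetCard.mpr ⟨hT, by omega⟩, ?_⟩
    have h3 : #(dbl T \ P) = 1 := by
      rw [Finset.card_sdiff_of_subset hP]; omega
    obtain ⟨x, hx⟩ := Finset.card_eq_one.mp h3
    rw [Finset.mem_image]
    have hx' : x ∈ dbl T \ P := by rw [hx]; simp
    refine ⟨x, (Finset.mem_sdiff.mp hx').1, ?_⟩
    ext y
    have : y ∈ dbl T \ P ↔ y = x := by rw [hx]; simp
    rw [Finset.mem_sdiff] at this
    rw [Finset.mem_erase]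
    have := @hP y
    tauto

/-- If `G` is a bipartite graph (no isolated vertices), then
`š(G) ≤ ∑_{d ∈ D^odd(G)} C(⌈Δ(G)/2⌉, (d+1)/2)·(d+1) + ∑_{d ∈ D^even(G)} C(⌈Δ(G)/2⌉, d/2)`. -/
theorem palette_index_bipartite {V : Type*} [Fintype V] [DecidableEq V]
    (G : SimpleGraph V) [DecidableRel G.Adj]
    (hbip : G.Colorable 2)
    (hiso : ∀ v : V, 0 < G.degree v) :
    paletteIndex G ≤
      ∑ d ∈ (Finset.univ.image (fun v => G.degree v)).filter (fun d => Odd d),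
          Nat.choose ((G.maxDegree + 1) / 2) ((d + 1) / 2) * (d + 1)
      + ∑ d ∈ (Finset.univ.image (fun v => G.degree v)).filter (fun d => Even d),
          Nat.choose ((G.maxDegree + 1) / 2) (d / 2) := by
  classical
  obtain ⟨col⟩ := hbip
  set k := (G.maxDegree + 1) / 2 with hk
  have hab : ∀ e : G.edgeSet, ∃ x y : V, (e : Sym2 V) = s(x, y) ∧ col x = 0 ∧ col y = 1 := by
    rintro ⟨e, he⟩
    induction e with
    | _ x y =>
      have hadj : G.Adj x y := he
      have hne := col.valid hadj
      by_cases h : col x = 0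
      · exact ⟨x, y, rfl, h, by omega⟩
      · exact ⟨y, x, Sym2.eq_swap, by omega, by omega⟩
  choose a b hs ha hb using hab
  have memv : ∀ (e : G.edgeSet) v, v ∈ (e : Sym2 V) ↔ v = a e ∨ v = b e := by
    intro e v; rw [hs]; simp
  have mem0 : ∀ (e : G.edgeSet) v, col v = 0 → (v ∈ (e : Sym2 V) ↔ a e = v) := by
    intro e v hv
    rw [memv]
    constructor
    · rintro (h | h)
      · exact h.symm
      · have := hb e; rw [← h, hv] at this; simp at this
    · exact fun h => Or.inl h.symm
  have mem1 : ∀ (e : G.edgeSet) v, col v ≠ 0 → (v ∈ (e : Sym2 V) ↔ b e = v) := by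
    intro e v hv
    rw [memv]
    constructor
    · rintro (h | h)
      · exact absurd (h ▸ ha e) hv
      · exact h.symm
    · exact fun h => Or.inr h.symm
  have hdeg : ∀ v, #{e : G.edgeSet | v ∈ (e : Sym2 V)} = G.degree v := by
    intro v
    rw [← G.card_incidenceFinset_eq_degree]
    apply Finset.card_bij (fun (e : G.edgeSet) _ => (e : Sym2 V))
    · intro e he
      simp only [Finset.mem_filter, Finset.mem_univ, true_and] at he
      rw [SimpleGraph.mem_incidenceFinset]
      exact ⟨e.2, he⟩
    · intro e _ e' _ h
      exact Subtype.ext h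
    · intro e he
      rw [SimpleGraph.mem_incidenceFinset] at he
      exact ⟨⟨e, he.1⟩, by simpa using he.2, rfl⟩
  have ha0 : ∀ v, col v = 0 → #{e | a e = v} = G.degree v := by
    intro v hv
    rw [← hdeg]
    congr 1
    ext e
    simp [mem0 e v hv]
  have hb1 : ∀ v, col v ≠ 0 → #{e | b e = v} = G.degree v := by
    intro v hv
    rw [← hdeg]
    congr 1
    ext e
    simp [mem1 e v hv]
  have ha' : ∀ v, (#{e | a e = v} + 1) / 2 ≤ k := by
    intro v
    have h1 : #{e | a e = v} ≤ G.degree v := by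
      rw [← hdeg]
      apply Finset.card_le_card
      intro e he
      simp only [Finset.mem_filter, Finset.mem_univ, true_and] at he ⊢
      rw [memv]; exact Or.inl he.symm
    have := G.degree_le_maxDegree v
    omega
  have hb' : ∀ v, (#{e | b e = v} + 1) / 2 ≤ k := by
    intro v
    have h1 : #{e | b e = v} ≤ G.degree v := by
      rw [← hdeg]
      apply Finset.card_le_card
      intro e he
      simp only [Finset.mem_filter, Finset.mem_univ, true_and] at he ⊢
      rw [memv]; exact Or.inr he.symm
    have := G.degree_le_maxDegree v
    omega
  obtain ⟨c, c1, cA, cB⟩ := core a b k ha' hb'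
  have c3 : ∀ e e' : G.edgeSet, ∀ v, v ∈ (e : Sym2 V) → v ∈ (e' : Sym2 V) → c e = c e' → e = e' := by
    intro e e' v h h' hc
    apply c1 e e' hc
    by_cases hv : col v = 0
    · rw [mem0 _ _ hv] at h h'
      left; rw [h, h']
    · rw [mem1 _ _ hv] at h h'
      right; rw [h, h']
  have cT : ∀ v, ∃ T ⊆ Finset.range k, #T = (G.degree v + 1) / 2 ∧
      ∀ e : G.edgeSet, v ∈ (e : Sym2 V) → c e / 2 ∈ T := by
    intro v
    by_cases hv : col v = 0
    · obtain ⟨T, h1, h2, h3⟩ := cA v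
      exact ⟨T, h1, by rw [h2, ha0 v hv], fun e he => h3 e ((mem0 _ _ hv).mp he)⟩
    · obtain ⟨T, h1, h2, h3⟩ := cB v
      exact ⟨T, h1, by rw [h2, hb1 v hv], fun e he => h3 e ((mem1 _ _ hv).mp he)⟩
  let φ : Sym2 V → ℕ := fun e => if h : e ∈ G.edgeSet then c ⟨e, h⟩ else 0
  have φ1 : ∀ e : G.edgeSet, φ e = c e := by
    intro e
    simp only [φ, e.2, dif_pos]
  have hproper : IsProperEdgeColoring G φ := by
    rintro e he e' he' hne ⟨v, hv, hv'⟩ heq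
    have h1 := φ1 ⟨e, he⟩
    have h2 := φ1 ⟨e', he'⟩
    have := c3 ⟨e, he⟩ ⟨e', he'⟩ v hv hv' (by rw [← h1, ← h2]; exact heq)
    exact hne (congrArg Subtype.val this)
  let P : V → Finset ℕ := fun v => ({e : G.edgeSet | v ∈ (e : Sym2 V)} : Finset G.edgeSet).image c
  have hP : ∀ v, palette G φ v = (P v : Set ℕ) := by
    intro v
    ext n
    simp only [palette, Set.mem_ofPred_eq, P, Finset.coe_image, Set.mem_image, Finset.coe_filter,
      Finset.mem_univ, true_and]
    constructor
    · rintro ⟨e, he, hv, h⟩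
      exact ⟨⟨e, he⟩, hv, by rw [← φ1]; exact h⟩
    · rintro ⟨e, hv, h⟩
      exact ⟨e, e.2, hv, by rw [φ1]; exact h⟩
  have hPc : ∀ v, #(P v) = G.degree v := by
    intro v
    rw [← hdeg, Finset.card_image_of_injOn]
    intro e he e' he' h
    simp only [Finset.coe_filter, Finset.mem_univ, true_and, Set.mem_ofPred_eq] at he he'
    exact c3 e e' v he he' h
  have hPm : ∀ v, P v ∈ cand k (G.degree v) := by
    intro v
    obtain ⟨T, h1, h2, h3⟩ := cT v
    rw [← hPc v] at h2 ⊢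
    refine mem_cand k _ T h1 h2 ?_
    intro n hn
    simp only [P, Finset.mem_image, Finset.mem_filter, Finset.mem_univ, true_and] at hn
    obtain ⟨e, he, rfl⟩ := hn
    rw [mem_dbl]
    exact h3 e he
  set D := Finset.univ.image (fun v => G.degree v) with hD
  have hle : paletteIndex G ≤ (Set.range (palette G φ)).ncard := Nat.sInf_le ⟨φ, hproper, rfl⟩
  have hsub : Set.range (palette G φ) ⊆
      (((D.biUnion (cand k)).image (fun s : Finset ℕ => (s : Set ℕ)) : Finset (Set ℕ)) : Set (Set ℕ)) := by
    rintro _ ⟨v, rfl⟩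
    rw [hP, Finset.coe_image]
    refine ⟨P v, ?_, rfl⟩
    rw [Finset.mem_coe, Finset.mem_biUnion]
    exact ⟨G.degree v, by simp [hD], hPm v⟩
  have h2 := Set.ncard_le_ncard hsub (Finset.finite_toSet _)
  rw [Set.ncard_coe_finset] at h2
  have h3 : #(D.biUnion (cand k)) ≤ ∑ d ∈ D, #(cand k d) := Finset.card_biUnion_le
  have h4 := Finset.sum_filter_add_sum_filter_not D (fun d => Odd d) (fun d => #(cand k d))
  have h5 : D.filter (fun d => ¬ Odd d) = D.filter (fun d => Even d) := by
    apply Finset.filter_congr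
    intro d _
    simp
  rw [h5] at h4
  refine hle.trans (h2.trans (Finset.card_image_le.trans (h3.trans (h4.symm.le.trans ?_))))
  apply Nat.add_le_add
  · exact Finset.sum_le_sum fun d hd => card_cand_odd k d (Finset.mem_filter.mp hd).2
  · exact Finset.sum_le_sum fun d hd => card_cand_even k d (Finset.mem_filter.mp hd).2
end

section
/- If G is a finite simple graph with no isolated vertices satisfying Δ(G) − δ(G) ≤ 2, where Δ(G) and δ(G) are the maximum and minimum degree of G, then š(G) ≤ Δ(G)² + Δ(G) + 1. -/
open SimpleGraph Finset

namespace PI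

def Prop' {V : Type*} (G : SimpleGraph V) (c : Sym2 V → ℕ) (K : Finset ℕ) : Prop :=
  (∀ x y, G.Adj x y → c s(x, y) ∈ K) ∧
  ∀ x y z, G.Adj x y → G.Adj x z → c s(x, y) = c s(x, z) → y = z

def Miss {V : Type*} (G : SimpleGraph V) (c : Sym2 V → ℕ) (u : V) (m : ℕ) : Prop :=
  ∀ y, G.Adj u y → c s(u, y) ≠ m

/-- In a graph of max degree two, a component has at most two vertices of degree at most one. -/
lemma three_ends {V : Type*} [Fintype V] (H : SimpleGraph V)
    (h2 : ∀ x, (H.neighborSet x).ncard ≤ 2) (u : V) (T : Finset V) (hT : 3 ≤ T.card)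
    (h1 : ∀ x ∈ T, (H.neighborSet x).ncard ≤ 1) (hr : ∀ x ∈ T, H.Reachable u x) : False := by
  classical
  set C := H.connectedComponentMk u with hC
  have hconn : C.toSimpleGraph.Connected := C.connected_toSimpleGraph
  have hE := hconn.card_vert_le_card_edgeSet_add_one
  have hsum := C.toSimpleGraph.sum_degrees_eq_twice_card_edges
  have hdeg : ∀ x : C, C.toSimpleGraph.degree x + (if (x : V) ∈ T then 1 else 0) ≤ 2 := by
    intro x
    have : C.toSimpleGraph.degree x ≤ (H.neighborSet x).ncard := by
      rw [← SimpleGraph.card_neighborSet_eq_degree, ← Nat.card_eq_fintype_card, Nat.card_coe_set_eq]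
      apply Set.ncard_le_ncard_of_injOn (fun y : C => (y : V))
      · intro y hy
        exact hy
      · intro a _ b _ h; exact Subtype.ext h
    split_ifs with h
    · have := h1 _ h; omega
    · have := h2 x; omega
  have hs := Finset.sum_le_sum (s := Finset.univ) (fun x _ => hdeg x)
  rw [Finset.sum_add_distrib, hsum] at hs
  have hTs : T.card ≤ ∑ x : C, (if (x : V) ∈ T then 1 else 0) := by
    rw [← Finset.card_filter]
    have : T ⊆ (Finset.univ.filter (fun x : C => (x : V) ∈ T)).image (fun x : C => (x : V)) := by
      intro x hx
      simp only [Finset.mem_image, Finset.mem_filter, Finset.mem_univ, true_and]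
      exact ⟨⟨x, by
        show H.connectedComponentMk x = C
        exact (SimpleGraph.ConnectedComponent.sound (hr x hx)).symm⟩, hx, rfl⟩
    exact (Finset.card_le_card this).trans Finset.card_image_le
  rw [Nat.card_eq_fintype_card, Nat.card_eq_fintype_card, ← SimpleGraph.edgeFinset_card] at hE
  simp only [Finset.sum_const, Finset.card_univ, smul_eq_mul] at hs
  omega

/-- Kempe change. -/
lemma kempe {V : Type*} [Fintype V] (G : SimpleGraph V) (c : Sym2 V → ℕ) (K : Finset ℕ)
    (hc : Prop' G c K) (i j : ℕ) (hi : i ∈ K) (hj : j ∈ K) (hij : i ≠ j)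
    (T : Finset V) (hT : 3 ≤ T.card) (hTi : ∀ x ∈ T, Miss G c x i) :
    ∃ (S : Set V) (c' : Sym2 V → ℕ), Prop' G c' K ∧ (∃ x ∈ T, x ∈ S) ∧ (∃ x ∈ T, x ∉ S) ∧
      (∀ x ∉ S, ∀ m, Miss G c x m → Miss G c' x m) ∧
      (∀ x ∈ S, ∀ m, Miss G c x m → Miss G c' x (Equiv.swap i j m)) := by
  classical
  let H : SimpleGraph V :=
    { Adj := fun x y => G.Adj x y ∧ (c s(x, y) = i ∨ c s(x, y) = j)
      symm := ⟨fun x y h => by rw [Sym2.eq_swap]; exact ⟨h.1.symm, h.2⟩⟩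
      loopless := ⟨fun x h => G.loopless.irrefl x h.1⟩ }
  obtain ⟨u, hu⟩ : T.Nonempty := Finset.card_pos.mp (by omega)
  let S : Set V := {x | H.Reachable u x}
  let c' : Sym2 V → ℕ := fun e => if ∃ x ∈ e, x ∈ S then Equiv.swap i j (c e) else c e
  have hS : ∀ x y, H.Adj x y → (x ∈ S ↔ y ∈ S) := fun x y h =>
    ⟨fun hx => SimpleGraph.Reachable.trans hx h.reachable,
      fun hy => SimpleGraph.Reachable.trans hy h.symm.reachable⟩
  have key : ∀ x y, G.Adj x y →
      c' s(x, y) = if x ∈ S then Equiv.swap i j (c s(x, y)) else c s(x, y) := by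
    intro x y h
    by_cases hh : c s(x, y) = i ∨ c s(x, y) = j
    · have := hS x y ⟨h, hh⟩
      simp only [c', Sym2.mem_iff, exists_eq_or_imp, exists_eq_left, ← this, or_self]
    · push Not at hh
      have : Equiv.swap i j (c s(x, y)) = c s(x, y) := Equiv.swap_apply_of_ne_of_ne hh.1 hh.2
      simp only [c', this, ite_self]
  refine ⟨S, c', ⟨?_, ?_⟩, ⟨u, hu, SimpleGraph.Reachable.refl u⟩, ?_, ?_, ?_⟩
  · intro x y h
    have h0 := hc.1 x y h
    rw [key x y h]
    split_ifs
    · rw [Equiv.swap_apply_def]; split_ifs <;> assumption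
    · assumption
  · intro x y z hy hz h
    rw [key x y hy, key x z hz] at h
    apply hc.2 x y z hy hz
    split_ifs at h
    · exact (Equiv.swap i j).injective h
    · exact h
  · by_contra hcon
    push Not at hcon
    refine three_ends H ?_ u T hT ?_ hcon
    · intro x
      have : (H.neighborSet x).ncard ≤ ({i, j} : Set ℕ).ncard := by
        apply Set.ncard_le_ncard_of_injOn (fun y => c s(x, y))
        · intro y hy; exact hy.2
        · intro a ha b hb h; exact hc.2 x a b ha.1 hb.1 h
      exact this.trans (Set.ncard_pair hij).le
    · intro x hx
      have : (H.neighborSet x).ncard ≤ ({j} : Set ℕ).ncard := by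
        apply Set.ncard_le_ncard_of_injOn (fun y => c s(x, y))
        · intro y hy
          rcases hy.2 with h | h
          · exact absurd h (hTi x hx y hy.1)
          · exact h
        · intro a ha b hb h; exact hc.2 x a b ha.1 hb.1 h
      exact this.trans (Set.ncard_singleton j).le
  · intro x hx m hm y hy
    rw [key x y hy, if_neg hx]; exact hm y hy
  · intro x hx m hm y hy
    rw [key x y hy, if_pos hx]
    exact fun h => hm y hy ((Equiv.swap i j).injective h)

/-- One can find a configuration in which some color is allotted to exactly one vertex. -/
lemma exists_single {V : Type*} [Fintype V] [DecidableEq V] (G : SimpleGraph V)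
    (K : Finset ℕ) (N : Finset V) (s : V) (hs : s ∈ N) (hN : N.card ≤ K.card) :
    ∀ (n : ℕ) (c : Sym2 V → ℕ) (A : V → Finset ℕ), Prop' G c K →
    (∀ u ∈ N, A u ⊆ K) → (∀ u ∈ N, ∀ m ∈ A u, Miss G c u m) →
    (∀ u ∈ N, (A u).card = if u = s then 1 else 2) → K.card - (N.biUnion A).card = n →
    ∃ (c : Sym2 V → ℕ) (A : V → Finset ℕ), Prop' G c K ∧
    (∀ u ∈ N, A u ⊆ K) ∧ (∀ u ∈ N, ∀ m ∈ A u, Miss G c u m) ∧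
    (∀ u ∈ N, (A u).card = if u = s then 1 else 2) ∧
    ∃ κ ∈ K, ∃ u ∈ N, κ ∈ A u ∧ ∀ w ∈ N, κ ∈ A w → w = u := by
  intro n
  induction n using Nat.strong_induction_on with
  | _ n ih =>
  intro c A hc hAK hM hcard hn
  by_cases hgood : ∃ κ ∈ K, ∃ u ∈ N, κ ∈ A u ∧ ∀ w ∈ N, κ ∈ A w → w = u
  · exact ⟨c, A, hc, hAK, hM, hcard, hgood⟩
  let X : ℕ → Finset V := fun m => N.filter (fun u => m ∈ A u)
  have hX1 : ∀ m ∈ K, (X m).card ≠ 1 := by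
    intro m hm h
    obtain ⟨u, hu⟩ := Finset.card_eq_one.mp h
    apply hgood
    have hu' : u ∈ X m := by rw [hu]; simp
    simp only [X, Finset.mem_filter] at hu'
    refine ⟨m, hm, u, hu'.1, hu'.2, fun w hw hwm => ?_⟩
    have : w ∈ X m := by simp [X, hw, hwm]
    rw [hu] at this; simpa using this
  have hsum : ∑ m ∈ K, (X m).card + 1 = 2 * N.card := by
    have h1 : ∑ m ∈ K, (X m).card = ∑ u ∈ N, (A u).card := by
      simp only [X, Finset.card_filter]
      rw [Finset.sum_comm]
      apply Finset.sum_congr rfl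
      intro u hu
      rw [← Finset.card_filter, Finset.filter_mem_eq_inter, Finset.inter_eq_right.mpr (hAK u hu)]
    rw [h1, Finset.sum_congr rfl hcard, ← Finset.add_sum_erase _ _ hs]
    rw [Finset.sum_congr rfl (g := fun _ => 2)]
    · have := Finset.card_erase_add_one hs
      simp; omega
    · intro x hx; rw [if_neg (Finset.ne_of_mem_erase hx)]
  obtain ⟨j, hj, hj0⟩ : ∃ j ∈ K, (X j).card = 0 := by
    by_contra hcon
    push Not at hcon
    have : ∑ m ∈ K, 2 ≤ ∑ m ∈ K, (X m).card := Finset.sum_le_sum (fun m hm => by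
      have := hX1 m hm; have := hcon m hm; omega)
    simp at this; omega
  obtain ⟨i, hi, hi3⟩ : ∃ i ∈ K, 3 ≤ (X i).card := by
    by_contra hcon
    push Not at hcon
    have : 2 ∣ ∑ m ∈ K, (X m).card := Finset.dvd_sum (fun m hm => by
      have := hX1 m hm; have := hcon m hm; omega)
    omega
  have hij : i ≠ j := by rintro rfl; omega
  have hjA : ∀ u ∈ N, j ∉ A u := by
    intro u hu h
    rw [Finset.card_eq_zero] at hj0
    have : u ∈ X j := by simp [X, hu, h]
    rw [hj0] at this; simp at this
  obtain ⟨S, c', hc', ⟨x, hxT, hxS⟩, ⟨y, hyT, hyS⟩, hm1, hm2⟩ := kempe G c K hc i j hi hj hij (X i) hi3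
    (fun x hx => by
      simp only [X, Finset.mem_filter] at hx
      exact hM x hx.1 i hx.2)
  simp only [X, Finset.mem_filter] at hxT hyT
  classical
  let A' : V → Finset ℕ := fun u => if u ∈ S then (A u).image (Equiv.swap i j) else A u
  have hA'K : ∀ u ∈ N, A' u ⊆ K := by
    intro u hu
    simp only [A']
    split_ifs
    · intro m hm
      obtain ⟨p, hp, rfl⟩ := Finset.mem_image.mp hm
      have := hAK u hu hp
      rw [Equiv.swap_apply_def]; split_ifs <;> assumption
    · exact hAK u hu
  refine ih (K.card - (N.biUnion A').card) ?_ c' A' hc' hA'K ?_ ?_ rfl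
  · have hlt : N.biUnion A ⊂ N.biUnion A' := by
      rw [Finset.ssubset_iff_of_subset]
      · refine ⟨j, ?_, ?_⟩
        · rw [Finset.mem_biUnion]
          refine ⟨x, hxT.1, ?_⟩
          simp only [A', if_pos hxS]
          exact Finset.mem_image.mpr ⟨i, hxT.2, Equiv.swap_apply_left i j⟩
        · rw [Finset.mem_biUnion]
          rintro ⟨u, hu, h⟩; exact hjA u hu h
      · intro m hm
        rw [Finset.mem_biUnion] at hm ⊢
        obtain ⟨u, hu, h⟩ := hm
        by_cases hmi : m = i
        · exact ⟨y, hyT.1, by simp only [A', if_neg hyS]; rw [hmi]; exact hyT.2⟩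
        · refine ⟨u, hu, ?_⟩
          simp only [A']
          split_ifs
          · refine Finset.mem_image.mpr ⟨m, h, Equiv.swap_apply_of_ne_of_ne hmi ?_⟩
            rintro rfl; exact hjA u hu h
          · exact h
    have h1 := Finset.card_lt_card hlt
    have h2 : (N.biUnion A').card ≤ K.card := Finset.card_le_card (Finset.biUnion_subset.mpr hA'K)
    omega
  · intro u hu m hm
    simp only [A'] at hm
    split_ifs at hm with h
    · obtain ⟨p, hp, rfl⟩ := Finset.mem_image.mp hm
      exact hm2 u h p (hM u hu p hp)
    · exact hm1 u h m (hM u hu m hm)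
  · intro u hu
    rw [← hcard u hu]
    simp only [A']
    split_ifs
    · exact Finset.card_image_of_injective _ (Equiv.swap i j).injective
    · rfl

/-- Extension lemma. -/
lemma extend {V : Type*} [Fintype V] [DecidableEq V] : ∀ (n : ℕ) (G : SimpleGraph V)
    (K : Finset ℕ) (N : Finset V) (s : V) (c : Sym2 V → ℕ) (A : V → Finset ℕ),
    N.card = n → N.card ≤ K.card → (s ∈ N ∨ N = ∅) → Prop' G c K →
    (∀ u ∈ N, A u ⊆ K) → (∀ u ∈ N, ∀ m ∈ A u, Miss G c u m) →
    (∀ u ∈ N, (A u).card = if u = s then 1 else 2) →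
    ∃ (c : Sym2 V → ℕ) (f : V → ℕ), Prop' G c K ∧ (∀ u ∈ N, f u ∈ K) ∧
      (∀ u ∈ N, Miss G c u (f u)) ∧ Set.InjOn f (N : Set V) := by
  intro n
  induction n with
  | zero =>
    intro G K N s c A hn _ _ hc _ _ _
    rw [Finset.card_eq_zero] at hn
    subst hn
    exact ⟨c, fun _ => 0, hc, by simp, by simp, by simp⟩
  | succ n ih =>
    intro G K N s c A hn hN hs hc hAK hM hcard
    have hs : s ∈ N := by
      rcases hs with h | h
      · exact h
      · subst h; simp at hn
    obtain ⟨c, A, hc, hAK, hM, hcard, κ, hκ, u, hu, hκu, huniq⟩ :=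
      exists_single G K N s hs hN _ c A hc hAK hM hcard rfl
    let G' : SimpleGraph V :=
      { Adj := fun x y => G.Adj x y ∧ c s(x, y) ≠ κ
        symm := ⟨fun x y h => by rw [Sym2.eq_swap]; exact ⟨h.1.symm, h.2⟩⟩
        loopless := ⟨fun x h => G.loopless.irrefl x h.1⟩ }
    have hN' : (N.erase u).card = n := by rw [Finset.card_erase_of_mem hu]; omega
    have hA2 : ∀ w ∈ N.erase u, A w ⊆ K.erase κ := by
      intro w hw m hm
      refine Finset.mem_erase.mpr ⟨?_, hAK w (Finset.mem_of_mem_erase hw) hm⟩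
      rintro rfl
      exact Finset.ne_of_mem_erase hw (huniq w (Finset.mem_of_mem_erase hw) hm)
    have hM2 : ∀ w ∈ N.erase u, ∀ m ∈ A w, Miss G' c w m := fun w hw m hm y hy =>
      hM w (Finset.mem_of_mem_erase hw) m hm y hy.1
    have hc2 : Prop' G' c (K.erase κ) :=
      ⟨fun x y h => Finset.mem_erase.mpr ⟨h.2, hc.1 x y h.1⟩,
        fun x y z hy hz h => hc.2 x y z hy.1 hz.1 h⟩
    have hKc : (N.erase u).card ≤ (K.erase κ).card := by
      rw [Finset.card_erase_of_mem hu, Finset.card_erase_of_mem hκ]; omega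
    have main : ∃ (c : Sym2 V → ℕ) (f : V → ℕ), Prop' G' c (K.erase κ) ∧
        (∀ w ∈ N.erase u, f w ∈ K.erase κ) ∧
        (∀ w ∈ N.erase u, Miss G' c w (f w)) ∧ Set.InjOn f (N.erase u : Set V) := by
      by_cases hus : u = s
      · rcases (N.erase u).eq_empty_or_nonempty with he | ⟨t, ht⟩
        · rw [he]
          exact ⟨c, fun _ => 0, hc2, by simp, by simp, by simp⟩
        · have htc : (A t).Nonempty := by
            rw [← Finset.card_pos, hcard t (Finset.mem_of_mem_erase ht)]; split_ifs <;> omega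
          obtain ⟨a, ha⟩ := htc
          refine ih G' (K.erase κ) (N.erase u) t c (fun w => if w = t then {a} else A w)
            hN' hKc (Or.inl ht) hc2 ?_ ?_ ?_
          · intro w hw
            split_ifs with h
            · subst h; exact (Finset.singleton_subset_iff.mpr ha).trans (hA2 w hw)
            · exact hA2 w hw
          · intro w hw m hm
            split_ifs at hm with h
            · subst h; rw [Finset.mem_singleton] at hm; subst hm; exact hM2 w hw _ ha
            · exact hM2 w hw m hm
          · intro w hw
            split_ifs with h
            · simp
            · rw [hcard w (Finset.mem_of_mem_erase hw), if_neg]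
              rw [← hus]; exact Finset.ne_of_mem_erase hw
      · exact ih G' (K.erase κ) (N.erase u) s c A hN' hKc
          (Or.inl (Finset.mem_erase.mpr ⟨fun h => hus h.symm, hs⟩)) hc2 hA2 hM2
          (fun w hw => hcard w (Finset.mem_of_mem_erase hw))
    obtain ⟨d, f, hd, hfK, hfM, hfi⟩ := main
    have hdk : ∀ x y, G.Adj x y → c s(x, y) ≠ κ → d s(x, y) ≠ κ := fun x y h h' =>
      Finset.ne_of_mem_erase (hd.1 x y ⟨h, h'⟩)
    refine ⟨fun e => if c e = κ then κ else d e, fun w => if w = u then κ else f w,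
      ⟨?_, ?_⟩, ?_, ?_, ?_⟩
    · intro x y h
      dsimp only
      split_ifs with h'
      · exact hκ
      · exact Finset.mem_of_mem_erase (hd.1 x y ⟨h, h'⟩)
    · intro x y z hy hz h
      dsimp only at h
      split_ifs at h with h1 h2 h2
      · exact hc.2 x y z hy hz (h1.trans h2.symm)
      · exact absurd h.symm (hdk x z hz h2)
      · exact absurd h (hdk x y hy h1)
      · exact hd.2 x y z ⟨hy, h1⟩ ⟨hz, h2⟩ h
    · intro w hw
      dsimp only
      split_ifs with h
      · exact hκ
      · exact Finset.mem_of_mem_erase (hfK w (Finset.mem_erase.mpr ⟨h, hw⟩))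
    · intro w hw y hy
      dsimp only
      split_ifs with h1 h2 h2
      · subst h2; exact absurd h1 (hM w hw κ hκu y hy)
      · exact (Finset.ne_of_mem_erase (hfK w (Finset.mem_erase.mpr ⟨h2, hw⟩))).symm
      · exact hdk w y hy h1
      · exact hfM w (Finset.mem_erase.mpr ⟨h2, hw⟩) y ⟨hy, h1⟩
    · intro a ha b hb h
      dsimp only at h
      split_ifs at h with h1 h2 h2
      · rw [h1, h2]
      · exact absurd h.symm (Finset.ne_of_mem_erase (hfK b (Finset.mem_erase.mpr ⟨h2, hb⟩)))
      · exact absurd h (Finset.ne_of_mem_erase (hfK a (Finset.mem_erase.mpr ⟨h1, ha⟩)))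
      · exact hfi (Finset.mem_coe.mpr (Finset.mem_erase.mpr ⟨h1, ha⟩))
          (Finset.mem_coe.mpr (Finset.mem_erase.mpr ⟨h2, hb⟩)) h

lemma fournier {V : Type*} [Fintype V] (k : ℕ) : ∀ (n : ℕ) (G : SimpleGraph V),
    G.edgeSet.ncard = n → (∀ x, (G.neighborSet x).ncard ≤ k) →
    (∀ x y, G.Adj x y → (G.neighborSet x).ncard = k → (G.neighborSet y).ncard ≠ k) →
    ∃ c : Sym2 V → ℕ, Prop' G c (Finset.range k) := by
  classical
  intro n
  induction n using Nat.strong_induction_on with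
  | _ n ih =>
  intro G hn hk hind
  by_cases hemp : ∀ x y, ¬ G.Adj x y
  · exact ⟨fun _ => 0, fun x y h => absurd h (hemp x y), fun x y z h => absurd h (hemp x y)⟩
  push Not at hemp
  obtain ⟨v, w, hvw, hlt⟩ : ∃ v w, G.Adj v w ∧ ∀ u, G.Adj v u → (G.neighborSet u).ncard < k := by
    by_cases h : ∃ x y, G.Adj x y ∧ (G.neighborSet x).ncard = k
    · obtain ⟨x, y, hxy, hx⟩ := h
      exact ⟨x, y, hxy, fun u hu => lt_of_le_of_ne (hk u) (hind x u hu hx)⟩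
    · push Not at h
      obtain ⟨x, y, hxy⟩ := hemp
      exact ⟨x, y, hxy, fun u hu => lt_of_le_of_ne (hk u) (h u x hu.symm)⟩
  let G' : SimpleGraph V :=
    { Adj := fun x y => G.Adj x y ∧ x ≠ v ∧ y ≠ v
      symm := ⟨fun x y h => ⟨h.1.symm, h.2.2, h.2.1⟩⟩
      loopless := ⟨fun x h => G.loopless.irrefl x h.1⟩ }
  have hle : G' ≤ G := fun x y h => h.1
  have hsub : ∀ x, G'.neighborSet x ⊆ G.neighborSet x := fun x y h => h.1
  have hmono : ∀ x, (G'.neighborSet x).ncard ≤ (G.neighborSet x).ncard := fun x =>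
    Set.ncard_le_ncard (hsub x)
  have hss : G'.edgeSet ⊂ G.edgeSet := by
    refine SimpleGraph.edgeSet_ssubset_edgeSet.mpr (lt_of_le_of_ne hle ?_)
    intro h
    have : G'.Adj v w := by rw [h]; exact hvw
    exact this.2.1 rfl
  obtain ⟨c, hc⟩ := ih _ (by rw [← hn]; exact Set.ncard_lt_ncard hss) G' rfl
    (fun x => (hmono x).trans (hk x))
    (fun x y hxy hx hy => hind x y hxy.1 (le_antisymm (hk x) (hx ▸ hmono x))
      (le_antisymm (hk y) (hy ▸ hmono y)))
  have hN : ∀ u, u ∈ G.neighborFinset v ↔ G.Adj v u := by simp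
  have hA : ∀ u, G.Adj v u → ∃ B : Finset ℕ, B ⊆ Finset.range k ∧ (∀ m ∈ B, Miss G' c u m) ∧
      B.card = if u = w then 1 else 2 := by
    intro u hu
    let P : Finset ℕ := Finset.range k \ (G'.neighborFinset u).image (fun y => c s(u, y))
    have h1 : (G'.neighborSet u).ncard + 1 ≤ (G.neighborSet u).ncard := by
      refine Set.ncard_lt_ncard ?_ (Set.toFinite _)
      refine (Set.ssubset_iff_of_subset (hsub u)).mpr ⟨v, hu.symm, fun h => h.2.2 rfl⟩
    have h2 := hlt u hu
    have h3 : (G'.neighborFinset u).card = (G'.neighborSet u).ncard := by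
      rw [← Set.ncard_coe_finset]; simp
    have h4 : 2 ≤ P.card := by
      have := Finset.le_card_sdiff ((G'.neighborFinset u).image (fun y => c s(u, y))) (Finset.range k)
      have h5 : ((G'.neighborFinset u).image (fun y => c s(u, y))).card ≤ _ := Finset.card_image_le
      rw [Finset.card_range] at this
      simp only [P]
      omega
    obtain ⟨B, hB, hBc⟩ := Finset.exists_subset_card_eq
      (show (if u = w then 1 else 2) ≤ P.card by split_ifs <;> omega)
    refine ⟨B, hB.trans Finset.sdiff_subset, ?_, hBc⟩
    intro m hm y hy h
    have := (Finset.mem_sdiff.mp (hB hm)).2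
    exact this (Finset.mem_image.mpr ⟨y, by simpa using hy, h⟩)
  choose! A hA1 hA2 hA3 using hA
  have hNc : (G.neighborFinset v).card ≤ (Finset.range k).card := by
    rw [Finset.card_range, ← Set.ncard_coe_finset]; simpa using hk v
  obtain ⟨d, f, hd, hfK, hfM, hfi⟩ := extend _ G' (Finset.range k) (G.neighborFinset v) w c A rfl hNc
    (Or.inl ((hN w).mpr hvw)) hc (fun u hu => hA1 u ((hN u).mp hu))
    (fun u hu => hA2 u ((hN u).mp hu)) (fun u hu => hA3 u ((hN u).mp hu))
  let e : Sym2 V → ℕ := fun e => if h : v ∈ e then f (Sym2.Mem.other h) else d e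
  have ev : ∀ y, e s(v, y) = f y := by
    intro y
    have h : v ∈ s(v, y) := Sym2.mem_mk_left v y
    have : Sym2.Mem.other h = y := by
      have := Sym2.other_spec h
      exact Sym2.congr_right.mp this
    simp only [e, dif_pos h, this]
  have ev' : ∀ x, e s(x, v) = f x := fun x => by rw [Sym2.eq_swap]; exact ev x
  have en : ∀ x y, x ≠ v → y ≠ v → e s(x, y) = d s(x, y) := by
    intro x y hx hy
    have : v ∉ s(x, y) := by
      rw [Sym2.mem_iff]; rintro (h | h)
      · exact hx h.symm
      · exact hy h.symm
    simp only [e, dif_neg this]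
  refine ⟨e, ?_, ?_⟩
  · intro x y h
    by_cases hx : x = v
    · subst hx; rw [ev]; exact hfK y ((hN y).mpr h)
    by_cases hy : y = v
    · subst hy; rw [ev']; exact hfK x ((hN x).mpr h.symm)
    rw [en x y hx hy]; exact hd.1 x y ⟨h, hx, hy⟩
  · intro x y z hy hz h
    by_cases hx : x = v
    · subst hx; rw [ev, ev] at h
      exact hfi (by simpa using hy) (by simpa using hz) h
    by_cases hyv : y = v
    · by_cases hzv : z = v
      · rw [hyv, hzv]
      · subst hyv
        rw [ev', en x z hx hzv] at h
        exact absurd h.symm (hfM x ((hN x).mpr hy.symm) z ⟨hz, hx, hzv⟩)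
    · by_cases hzv : z = v
      · subst hzv
        rw [ev', en x y hx hyv] at h
        exact absurd h (hfM x ((hN x).mpr hz.symm) y ⟨hy, hx, hyv⟩)
      · rw [en x y hx hyv, en x z hx hzv] at h
        exact hd.2 x y z ⟨hy, hx, hyv⟩ ⟨hz, hx, hzv⟩ h

/-- Coloring with an extra color `k` used only on edges between vertices of degree `k`. -/
lemma coloring {V : Type*} [Fintype V] (k : ℕ) (G : SimpleGraph V)
    (hk : ∀ x, (G.neighborSet x).ncard ≤ k) :
    ∃ c : Sym2 V → ℕ, Prop' G c (Finset.range (k + 1)) ∧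
      ∀ x y, G.Adj x y → c s(x, y) = k → (G.neighborSet x).ncard = k := by
  classical
  let 𝓜 : Set (SimpleGraph V) := {M | M ≤ G ∧ (∀ x y z, M.Adj x y → M.Adj x z → y = z) ∧
    ∀ x y, M.Adj x y → (G.neighborSet x).ncard = k}
  have hne : 𝓜.Nonempty := ⟨⊥, bot_le, by simp, by simp⟩
  obtain ⟨M, hM⟩ := (Set.toFinite 𝓜).exists_maximal hne
  obtain ⟨hMG, hMm, hMk⟩ := hM.prop
  have hsub : ∀ x, (G \ M).neighborSet x ⊆ G.neighborSet x := fun x y h => h.1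
  have hmono : ∀ x, ((G \ M).neighborSet x).ncard ≤ (G.neighborSet x).ncard := fun x =>
    Set.ncard_le_ncard (hsub x)
  have hfree : ∀ x, ((G \ M).neighborSet x).ncard = k →
      (G.neighborSet x).ncard = k ∧ ∀ y, ¬ M.Adj x y := by
    intro x hx
    have hx' : (G.neighborSet x).ncard = k := le_antisymm (hk x) (hx ▸ hmono x)
    refine ⟨hx', fun y hy => ?_⟩
    have : ((G \ M).neighborSet x).ncard < (G.neighborSet x).ncard := by
      refine Set.ncard_lt_ncard ?_ (Set.toFinite _)
      exact (Set.ssubset_iff_of_subset (hsub x)).mpr ⟨y, hMG hy, fun h => h.2 hy⟩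
    omega
  obtain ⟨c, hc⟩ := fournier k _ (G \ M) rfl (fun x => (hmono x).trans (hk x)) (by
    intro x y hxy hx hy
    obtain ⟨hx1, hx2⟩ := hfree x hx
    obtain ⟨hy1, hy2⟩ := hfree y hy
    have hxy' : G.Adj x y := hxy.1
    have hmem : M ⊔ SimpleGraph.edge x y ∈ 𝓜 := by
      refine ⟨sup_le hMG ?_, ?_, ?_⟩
      · rw [SimpleGraph.edge_le_iff]; right; exact hxy'
      · intro a b d hab had
        have hx2' : ∀ z, ¬ M.Adj z x := fun z h => hx2 z h.symm
        have hy2' : ∀ z, ¬ M.Adj z y := fun z h => hy2 z h.symm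
        simp only [SimpleGraph.sup_adj, SimpleGraph.edge_adj] at hab had
        have := hMm a b d
        grind
      · intro a b hab
        simp only [SimpleGraph.sup_adj, SimpleGraph.edge_adj] at hab
        rcases hab with h | ⟨⟨rfl, rfl⟩ | ⟨rfl, rfl⟩, _⟩
        · exact hMk a b h
        · exact hx1
        · exact hy1
    have := hM.le_of_ge hmem le_sup_left
    have hadj : (M ⊔ SimpleGraph.edge x y).Adj x y := by
      simp [SimpleGraph.edge_adj, hxy'.ne]
    exact hx2 y (this hadj))
  have hck : ∀ x y, G.Adj x y → ¬ M.Adj x y → c s(x, y) < k := fun x y h h' =>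
    Finset.mem_range.mp (hc.1 x y ⟨h, h'⟩)
  refine ⟨fun e => if e ∈ M.edgeSet then k else c e, ⟨?_, ?_⟩, ?_⟩
  · intro x y h
    simp only [SimpleGraph.mem_edgeSet, Finset.mem_range]
    split_ifs with h'
    · omega
    · have := hck x y h h'; omega
  · intro x y z hy hz h
    simp only [SimpleGraph.mem_edgeSet] at h
    split_ifs at h with h1 h2 h2
    · exact hMm x y z h1 h2
    · have := hck x z hz h2; omega
    · have := hck x y hy h1; omega
    · exact hc.2 x y z ⟨hy, h1⟩ ⟨hz, h2⟩ h
  · intro x y h hh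
    simp only [SimpleGraph.mem_edgeSet] at hh
    split_ifs at hh with h1
    · exact hMk x y h1
    · have := hck x y h h1; omega

end PI

/-- If `Δ(G) − δ(G) ≤ 2`, then `š(G) ≤ Δ(G)² + Δ(G) + 1`. -/
theorem palette_index_almost_regular {V : Type*} [Fintype V]
    (G : SimpleGraph V) [DecidableRel G.Adj]
    (hiso : ∀ v : V, 0 < G.degree v)
    (hdeg : G.maxDegree - G.minDegree ≤ 2) :
    paletteIndex G ≤ G.maxDegree ^ 2 + G.maxDegree + 1 := by
  classical
  have hnd : ∀ x, (G.neighborSet x).ncard = G.degree x := by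
    intro x
    rw [← SimpleGraph.card_neighborSet_eq_degree, ← Nat.card_eq_fintype_card, Nat.card_coe_set_eq]
  obtain ⟨c, hc, hck⟩ := PI.coloring G.maxDegree G (fun x => by
    rw [hnd]; exact G.degree_le_maxDegree x)
  have hlow : ∀ x, G.maxDegree ≤ G.degree x + 2 := fun x => by
    have := G.minDegree_le_degree x; omega
  have hup : ∀ x, G.degree x ≤ G.maxDegree := fun x => G.degree_le_maxDegree x
  simp only [hnd] at hck
  generalize G.maxDegree = k at *
  have hproper : IsProperEdgeColoring G c := by
    rintro e₁ h₁ e₂ h₂ hne ⟨v, hv1, hv2⟩ h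
    obtain ⟨y, rfl⟩ := hv1
    obtain ⟨z, rfl⟩ := hv2
    exact hne (by rw [hc.2 v y z h₁ h₂ h])
  have hpal : ∀ v, palette G c v =
      (((G.neighborFinset v).image (fun y => c s(v, y)) : Finset ℕ) : Set ℕ) := by
    intro v
    ext n
    simp only [palette, Set.mem_ofPred_eq, Finset.coe_image, Set.mem_image, Finset.mem_coe,
      SimpleGraph.mem_neighborFinset]
    constructor
    · rintro ⟨e, he, ⟨y, rfl⟩, rfl⟩
      exact ⟨y, he, rfl⟩
    · rintro ⟨y, hy, rfl⟩
      exact ⟨s(v, y), hy, Sym2.mem_mk_left v y, rfl⟩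
  have hcard : ∀ v, ((G.neighborFinset v).image (fun y => c s(v, y))).card = G.degree v := by
    intro v
    rw [Finset.card_image_of_injOn, SimpleGraph.card_neighborFinset_eq_degree]
    intro a ha b hb h
    exact hc.2 v a b (by simpa using ha) (by simpa using hb) h
  have hsubset : ∀ v, (G.neighborFinset v).image (fun y => c s(v, y)) ⊆ Finset.range (k + 1) := by
    intro v m hm
    simp only [Finset.mem_image, SimpleGraph.mem_neighborFinset] at hm
    obtain ⟨y, hy, rfl⟩ := hm
    exact hc.1 v y hy
  have hsubset' : ∀ v, G.degree v ≠ k →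
      (G.neighborFinset v).image (fun y => c s(v, y)) ⊆ Finset.range k := by
    intro v hv m hm
    have h1 := Finset.mem_range.mp (hsubset v hm)
    simp only [Finset.mem_image, SimpleGraph.mem_neighborFinset] at hm
    obtain ⟨y, hy, rfl⟩ := hm
    have : c s(v, y) ≠ k := fun h => hv (hck v y hy h)
    exact Finset.mem_range.mpr (by omega)
  have hbound : ∀ F : Finset (Finset ℕ),
      (∀ v, (G.neighborFinset v).image (fun y => c s(v, y)) ∈ F) → paletteIndex G ≤ F.card := by
    intro F hF
    have h1 : paletteIndex G ≤ (Set.range (palette G c)).ncard :=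
      Nat.sInf_le ⟨c, hproper, rfl⟩
    have h2 : Set.range (palette G c) ⊆ (fun P : Finset ℕ => (P : Set ℕ)) '' (F : Set (Finset ℕ)) := by
      rintro _ ⟨v, rfl⟩
      exact ⟨_, hF v, (hpal v).symm⟩
    have h3 := Set.ncard_le_ncard h2 (F.finite_toSet.image _)
    have h4 := Set.ncard_image_le (f := fun P : Finset ℕ => (P : Set ℕ)) F.finite_toSet
    rw [Set.ncard_coe_finset] at h4
    omega
  by_cases hk2 : k < 2
  · have := hbound (Finset.powersetCard k (Finset.range (k + 1))) (fun v => by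
      rw [Finset.mem_powersetCard]
      refine ⟨hsubset v, ?_⟩
      rw [hcard]
      have := hiso v; have := hup v; omega)
    rw [Finset.card_powersetCard, Finset.card_range, Nat.choose_succ_self_right] at this
    nlinarith
  · obtain ⟨j, rfl⟩ : ∃ j, k = j + 2 := ⟨k - 2, by omega⟩
    have := hbound (Finset.powersetCard (j + 2) (Finset.range (j + 2 + 1)) ∪
      (Finset.powersetCard (j + 1) (Finset.range (j + 2)) ∪
        Finset.powersetCard j (Finset.range (j + 2)))) (fun v => by
      simp only [Finset.mem_union, Finset.mem_powersetCard, hcard]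
      have h1 := hup v
      have h2 := hlow v
      by_cases h : G.degree v = j + 2
      · exact Or.inl ⟨hsubset v, h⟩
      · have h3 := hsubset' v h
        by_cases h' : G.degree v = j + 1
        · exact Or.inr (Or.inl ⟨h3, h'⟩)
        · exact Or.inr (Or.inr ⟨h3, by omega⟩))
    refine this.trans ((Finset.card_union_le _ _).trans
      ((Nat.add_le_add_left (Finset.card_union_le _ _) _).trans ?_))
    simp only [Finset.card_powersetCard, Finset.card_range, Nat.choose_succ_self_right]
    have h5 : (j + 2).choose j = (j + 2).choose 2 := by
      rw [← Nat.choose_symm_of_eq_add (a := 2) (b := j)]; omega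
    have h6 : (j + 2).choose 2 * 2 = (j + 2) * (j + 1) := by
      rw [Nat.choose_two_right]
      exact Nat.div_mul_cancel (by
        have := (Nat.even_mul_succ_self (j + 1)).two_dvd
        rw [mul_comm]; simpa using this)
    rw [h5]
    nlinarith
end

section
/- If G is a finite bipartite graph with no isolated vertices in which every vertex has even degree and whose maximum degree is 4, then š(G) ≤ 3. -/
open SimpleGraph Finset

theorem exists_flip_of_invol {Q : Type*} (t : Q → Q) (ht : ∀ q, t (t q) = q)
    (hf : ∀ q, t q ≠ q) : ∃ f : Q → Bool, ∀ q, f (t q) = !f q := by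
  classical
  let _ : LinearOrder Q := linearOrderOfSTO WellOrderingRel
  refine ⟨fun q => decide (q < t q), fun q => ?_⟩
  simp only [ht]
  rcases lt_trichotomy q (t q) with h | h | h
  · simp [h, h.le]
  · exact absurd h.symm (hf q)
  · simp [h, h.le]

theorem exists_flip_two {D : Type*} (s t : Equiv.Perm D) (hs : ∀ d, s (s d) = d)
    (ht : ∀ d, t (t d) = d) (hsf : ∀ d, s d ≠ d) (htf : ∀ d, t d ≠ d) :
    ∃ o : D → Bool, (∀ d, o (s d) = !o d) ∧ (∀ d, o (t d) = !o d) := by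
  classical
  set p : Equiv.Perm D := s * t with hp
  have hti : t⁻¹ = t := by ext d; rw [Equiv.Perm.inv_eq_iff_eq]; exact (ht d).symm
  have hsi : s⁻¹ = s := by ext d; rw [Equiv.Perm.inv_eq_iff_eq]; exact (hs d).symm
  have hconj1 : t * p * t⁻¹ = p⁻¹ := by
    rw [hp, mul_inv_rev, hti, hsi]; ext d; simp [ht]
  have hconj : ∀ (k : ℤ) d, t ((p ^ k) d) = (p ^ (-k)) (t d) := by
    intro k d
    have h : t * p ^ k * t⁻¹ = p ^ (-k) := by
      rw [← conj_zpow, hconj1, inv_zpow, zpow_neg]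
    rw [← h]; simp
  have hne : ∀ d, ¬ p.SameCycle d (t d) := by
    rintro d ⟨k, hk⟩
    rcases Int.even_or_odd' k with ⟨m, h | h⟩
    · apply htf ((p ^ m) d)
      rw [hconj, ← hk, ← Equiv.Perm.mul_apply, ← zpow_add]
      congr 2; omega
    · apply hsf (t ((p ^ m) d))
      have h1 : s (t ((p ^ m) d)) = (p ^ (1 + m)) d := by
        rw [zpow_add, zpow_one]; rfl
      rw [h1, hconj, ← hk, ← Equiv.Perm.mul_apply, ← zpow_add]
      congr 2; omega
  let Q := Quotient (Equiv.Perm.SameCycle.setoid p)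
  let T : Q → Q := Quotient.map t (by
    rintro a b ⟨k, hk⟩
    exact ⟨-k, by rw [← hconj, hk]⟩)
  obtain ⟨f, hf⟩ := exists_flip_of_invol T
    (by intro q; induction q using Quotient.inductionOn with | _ d => simp [T, ht])
    (by
      intro q; induction q using Quotient.inductionOn with | _ d =>
      intro h
      have h' : p.SameCycle (t d) d := Quotient.exact h
      exact hne d h'.symm)
  have h2 : ∀ d, f (Quotient.mk _ (t d)) = !f (Quotient.mk _ d) := fun d => hf (Quotient.mk _ d)
  refine ⟨fun d => f (Quotient.mk _ d), fun d => ?_, h2⟩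
  rw [← h2]
  refine congrArg f (Quotient.sound ?_)
  have : p.SameCycle (t d) (s d) := ⟨1, by simp [hp, ht]⟩
  exact this.symm

theorem exists_pairing {D : Type*} [Fintype D] [DecidableEq D] {X : Type*} [DecidableEq X]
    (f : D → X) (he : ∀ x, Even (univ.filter (fun d => f d = x)).card) :
    ∃ s : Equiv.Perm D, (∀ d, s (s d) = d) ∧ (∀ d, s d ≠ d) ∧ ∀ d, f (s d) = f d := by
  have hx : ∀ x, ∃ s : Equiv.Perm {d // f d = x}, (∀ d, s (s d) = d) ∧ (∀ d, s d ≠ d) := by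
    intro x
    obtain ⟨m, hm⟩ := he x
    have e : {d // f d = x} ≃ Fin m × Bool := Fintype.equivOfCardEq (by
      rw [Fintype.card_subtype, hm]; simp; omega)
    let b : Equiv.Perm (Fin m × Bool) := Equiv.prodCongr (Equiv.refl _) Equiv.boolNot
    refine ⟨(e.trans b).trans e.symm, ?_, ?_⟩
    · intro d
      have hb : ∀ z, b (b z) = z := by
        rintro ⟨i, z⟩; cases z <;> rfl
      simp only [Equiv.trans_apply, Equiv.apply_symm_apply, hb, Equiv.symm_apply_apply]
    · intro d h
      have h := congrArg e h
      have := congrArg Prod.snd h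
      simp [b] at this
  choose S h1 h2 using hx
  let s : D → D := fun d => (S (f d) ⟨d, rfl⟩).1
  have hsf : ∀ d, f (s d) = f d := fun d => (S (f d) ⟨d, rfl⟩).2
  have hss : ∀ x (d : {d // f d = x}), s d.1 = (S x d).1 := by
    rintro x ⟨d, rfl⟩; rfl
  have hinv : ∀ d, s (s d) = d := by
    intro d
    have := hss (f d) (S (f d) ⟨d, rfl⟩)
    rw [h1] at this
    exact this
  refine ⟨⟨s, s, hinv, hinv⟩, hinv, ?_, hsf⟩
  intro d h
  exact h2 (f d) ⟨d, rfl⟩ (Subtype.ext h)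

theorem card_half {D : Type*} [Fintype D] [DecidableEq D] (P : D → Prop) [DecidablePred P]
    (s : Equiv.Perm D) (hs : ∀ d, s (s d) = d) (x : D → Bool)
    (hP : ∀ d, P d → P (s d)) (hx : ∀ d, P d → x (s d) = !x d) (b : Bool) :
    2 * (univ.filter (fun d => P d ∧ x d = b)).card = (univ.filter P).card := by
  have key : (univ.filter (fun d => P d ∧ x d = b)).card
      = (univ.filter (fun d => P d ∧ ¬ x d = b)).card := by
    apply Finset.card_bij' (fun d _ => s d) (fun d _ => s d)
    · intro d hd
      simp only [mem_filter, mem_univ, true_and] at hd ⊢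
      refine ⟨hP d hd.1, ?_⟩
      rw [hx d hd.1, hd.2]; simp
    · intro d hd
      simp only [mem_filter, mem_univ, true_and] at hd ⊢
      refine ⟨hP d hd.1, ?_⟩
      rw [hx d hd.1]
      revert hd; cases x d <;> cases b <;> simp
    · intro d _; exact hs d
    · intro d _; exact hs d
  have h := Finset.card_filter_add_card_filter_not (s := univ.filter P) (fun d => x d = b)
  rw [Finset.filter_filter, Finset.filter_filter, ← key] at h
  omega

/-- If `G` is an Eulerian (all degrees even) bipartite graph with `Δ(G) = 4`
and no isolated vertices, then `š(G) ≤ 3`. -/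
theorem palette_index_even_bipartite_deg4 {V : Type*} [Fintype V]
    (G : SimpleGraph V) [DecidableRel G.Adj]
    (hbip : G.Colorable 2)
    (hiso : ∀ v : V, 0 < G.degree v)
    (heven : ∀ v : V, Even (G.degree v))
    (hmax : G.maxDegree = 4) :
    paletteIndex G ≤ 3 := by
  classical
  have hdeg : ∀ v, G.degree v = 2 ∨ G.degree v = 4 := by
    intro v
    have h1 := G.degree_le_maxDegree v
    have h2 := hiso v
    obtain ⟨k, hk⟩ := heven v
    omega
  obtain ⟨C⟩ := hbip
  have hcard : ∀ v, (univ.filter (fun d : G.Dart => d.fst = v)).card = G.degree v := by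
    intro v
    exact G.dart_fst_fiber_card_eq_degree v
  let t : Equiv.Perm G.Dart := ⟨Dart.symm, Dart.symm, Dart.symm_symm, Dart.symm_symm⟩
  have ht : ∀ d, t (t d) = d := Dart.symm_symm
  have htf : ∀ d, t d ≠ d := Dart.symm_ne
  -- first pairing
  obtain ⟨s1, s1i, s1f, s1v⟩ := exists_pairing (fun d : G.Dart => d.fst)
    (fun v => by rw [hcard]; exact heven v)
  obtain ⟨o1, o1s, o1t⟩ := exists_flip_two s1 t s1i ht s1f htf
  have c1 : ∀ v b, 2 * (univ.filter (fun d : G.Dart => d.fst = v ∧ o1 d = b)).card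
      = G.degree v := by
    intro v b
    rw [← hcard]
    exact card_half _ s1 s1i o1 (fun d hd => (s1v d).trans hd) (fun d _ => o1s d) b
  -- second pairing
  obtain ⟨s2, s2i, s2f, s2v⟩ := exists_pairing
    (fun d : G.Dart => (d.fst, decide (G.degree d.fst = 4) && o1 d)) (by
      rintro ⟨v, b⟩
      simp only [Prod.mk.injEq]
      rcases hdeg v with h | h
      · cases b
        · have : (univ.filter (fun d : G.Dart => d.fst = v ∧
              (decide (G.degree d.fst = 4) && o1 d) = false)) =
              univ.filter (fun d : G.Dart => d.fst = v) := by
            apply Finset.filter_congr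
            intro d _
            constructor
            · exact fun h => h.1
            · rintro rfl; simp [h]
          rw [this, hcard, h]; decide
        · have : (univ.filter (fun d : G.Dart => d.fst = v ∧
              (decide (G.degree d.fst = 4) && o1 d) = true)) = ∅ := by
            apply Finset.filter_eq_empty_iff.2
            rintro d _ ⟨rfl, h'⟩
            simp [h] at h'
          rw [this]; simp
      · have : (univ.filter (fun d : G.Dart => d.fst = v ∧
              (decide (G.degree d.fst = 4) && o1 d) = b)) =
              univ.filter (fun d : G.Dart => d.fst = v ∧ o1 d = b) := by
          apply Finset.filter_congr
          intro d _
          constructor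
          · rintro ⟨rfl, h'⟩; simpa [h] using h'
          · rintro ⟨rfl, h'⟩; simpa [h] using h'
        rw [this]
        have := c1 v b
        exact ⟨1, by omega⟩)
  have s2v1 : ∀ d, (s2 d).fst = d.fst := fun d => (Prod.mk.inj (s2v d)).1
  have s2v2 : ∀ d, G.degree d.fst = 4 → o1 (s2 d) = o1 d := by
    intro d hd
    have := (Prod.mk.inj (s2v d)).2
    rw [s2v1 d] at this
    simpa [hd] using this
  obtain ⟨o2, o2s, o2t⟩ := exists_flip_two s2 t s2i ht s2f htf
  let x : G.Dart → Bool := fun d => xor (o1 d) (o2 d)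
  have xt : ∀ d, x (t d) = x d := by
    intro d; simp only [x, o1t, o2t]; cases o1 d <;> cases o2 d <;> rfl
  have two : ∀ v, G.degree v = 2 → ∀ d d' : G.Dart, d.fst = v → d'.fst = v → d' ≠ d →
      ∀ s : Equiv.Perm G.Dart, (s d).fst = v → s d ≠ d → s d = d' := by
    intro v hv d d' h1 h2 h3 s h4 h5
    by_contra h6
    have : ({d, d', s d} : Finset G.Dart) ⊆ univ.filter (fun d : G.Dart => d.fst = v) := by
      intro a ha
      simp only [mem_insert, mem_singleton] at ha
      simp only [mem_filter, mem_univ, true_and]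
      rcases ha with rfl | rfl | rfl <;> assumption
    have := Finset.card_le_card this
    rw [hcard, hv, Finset.card_eq_three.2 ⟨d, d', s d, h3.symm, h5.symm, Ne.symm h6, rfl⟩] at this
    omega
  have c2 : ∀ v b, (univ.filter (fun d : G.Dart => d.fst = v ∧ x d = b)).card = 0 ∨
      (univ.filter (fun d : G.Dart => d.fst = v ∧ x d = b)).card = 2 := by
    intro v b
    rcases hdeg v with h | h
    · rcases Finset.eq_empty_or_nonempty
        (univ.filter (fun d : G.Dart => d.fst = v ∧ x d = b)) with h0 | ⟨d, hd⟩
      · left; rw [h0]; rfl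
      · right
        simp only [mem_filter, mem_univ, true_and] at hd
        obtain ⟨hdv, hdx⟩ := hd
        have e2 : s1 d = s2 d := two v h d (s2 d) hdv ((s2v1 d).trans hdv) (s2f d) s1
          ((s1v d).trans hdv) (s1f d)
        have hx2 : x (s2 d) = b := by
          rw [← hdx]
          simp only [x, o2s]
          rw [← e2, o1s]
          cases o1 d <;> cases o2 d <;> rfl
        apply le_antisymm
        · rw [← h, ← hcard v]
          apply Finset.card_le_card
          intro a ha
          simp only [mem_filter, mem_univ, true_and] at ha ⊢
          exact ha.1
        · rw [← Finset.card_pair (s2f d)]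
          apply Finset.card_le_card
          intro a ha
          simp only [mem_insert, mem_singleton] at ha
          simp only [mem_filter, mem_univ, true_and]
          rcases ha with rfl | rfl
          · exact ⟨(s2v1 d).trans hdv, hx2⟩
          · exact ⟨hdv, hdx⟩
    · right
      have := card_half (fun d : G.Dart => d.fst = v) s2 s2i x
        (fun d hd => (s2v1 d).trans hd) (by
          rintro d rfl
          simp only [x, o2s, s2v2 d h]
          cases o1 d <;> cases o2 d <;> rfl) b
      rw [hcard, h] at this
      omega
  -- third pairing
  obtain ⟨s3, s3i, s3f, s3v⟩ := exists_pairing (fun d : G.Dart => (d.fst, x d)) (by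
      rintro ⟨v, b⟩
      simp only [Prod.mk.injEq]
      rcases c2 v b with h | h <;> rw [h] <;> decide)
  have s3v1 : ∀ d, (s3 d).fst = d.fst := fun d => (Prod.mk.inj (s3v d)).1
  have s3v2 : ∀ d, x (s3 d) = x d := fun d => (Prod.mk.inj (s3v d)).2
  obtain ⟨o3, o3s, o3t⟩ := exists_flip_two s3 t s3i ht s3f htf
  let y : G.Dart → Bool := fun d => xor (o3 d) (decide (C d.fst = 0))
  have yt : ∀ d, y (t d) = y d := by
    intro d
    have hne : C d.fst ≠ C d.snd := C.valid d.adj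
    have h2 : (t d).fst = d.snd := rfl
    simp only [y, o3t, h2]
    have : decide (C d.snd = 0) = !decide (C d.fst = 0) := by
      revert hne
      generalize C d.fst = a
      generalize C d.snd = b
      revert a b
      decide
    rw [this]
    cases o3 d <;> simp
  have ys : ∀ d, y (s3 d) = !y d := by
    intro d
    simp only [y, o3s, s3v1]
    cases o3 d <;> simp
  let col : G.Dart → ℕ := fun d => 2 * (x d).toNat + (y d).toNat
  have colt : ∀ d, col d.symm = col d := by
    intro d
    have h1 : x d.symm = x d := xt d
    have h2 : y d.symm = y d := yt d
    simp only [col, h1, h2]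
  let c : Sym2 V → ℕ := fun e => if h : ∃ d : G.Dart, d.edge = e then col h.choose else 0
  have hc : ∀ d : G.Dart, c d.edge = col d := by
    intro d
    have h : ∃ d' : G.Dart, d'.edge = d.edge := ⟨d, rfl⟩
    simp only [c, dif_pos h]
    rcases (dart_edge_eq_iff _ _).1 h.choose_spec with h' | h'
    · rw [h']
    · rw [h', colt]
  have hdart : ∀ e ∈ G.edgeSet, ∀ v ∈ e, ∃ d : G.Dart, d.edge = e ∧ d.fst = v := by
    intro e he v hv
    obtain ⟨w, rfl⟩ := Sym2.mem_iff_exists.1 hv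
    exact ⟨⟨(v, w), he⟩, rfl, rfl⟩
  have hproper : IsProperEdgeColoring G c := by
    rintro e₁ h₁ e₂ h₂ hne ⟨v, hv₁, hv₂⟩ heq
    obtain ⟨d₁, rfl, hd₁⟩ := hdart e₁ h₁ v hv₁
    obtain ⟨d₂, rfl, hd₂⟩ := hdart e₂ h₂ v hv₂
    rw [hc, hc] at heq
    have hd : d₁ ≠ d₂ := fun h => hne (by rw [h])
    have hxy : x d₁ = x d₂ ∧ y d₁ = y d₂ := by
      simp only [col] at heq
      revert heq
      cases x d₁ <;> cases x d₂ <;> cases y d₁ <;> cases y d₂ <;> simp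
    have h3 : s3 d₁ ≠ d₂ := by
      intro h
      have := ys d₁
      rw [h, hxy.2] at this
      revert this; cases y d₂ <;> simp
    have hsub : ({d₁, d₂, s3 d₁} : Finset G.Dart) ⊆
        univ.filter (fun d : G.Dart => d.fst = v ∧ x d = x d₁) := by
      intro a ha
      simp only [mem_insert, mem_singleton] at ha
      simp only [mem_filter, mem_univ, true_and]
      rcases ha with rfl | rfl | rfl
      · exact ⟨hd₁, rfl⟩
      · exact ⟨hd₂, hxy.1.symm⟩
      · exact ⟨(s3v1 _).trans hd₁, s3v2 _⟩
    have := Finset.card_le_card hsub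
    rw [Finset.card_eq_three.2 ⟨d₁, d₂, s3 d₁, hd, (s3f d₁).symm, h3.symm, rfl⟩] at this
    rcases c2 v (x d₁) with h | h <;> omega
  have hpal : ∀ v, palette G c v = {n | ∃ d : G.Dart, d.fst = v ∧ n / 2 = (x d).toNat} := by
    intro v
    ext n
    constructor
    · rintro ⟨e, he, hv, rfl⟩
      obtain ⟨d, rfl, hd⟩ := hdart e he v hv
      refine ⟨d, hd, ?_⟩
      rw [hc]
      simp only [col]
      cases x d <;> cases y d <;> rfl
    · rintro ⟨d, hd, hn⟩
      have hmem : ∀ d' : G.Dart, d'.fst = v → col d' ∈ palette G c v := by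
        rintro d' rfl
        exact ⟨d'.edge, d'.edge_mem, by simp [Dart.edge], hc d'⟩
      have hA : n = col d ∨ n = col (s3 d) := by
        simp only [col, ys, s3v2]
        have : (y d).toNat = 0 ∨ (y d).toNat = 1 := by cases y d <;> simp
        have h' : (!y d).toNat = 1 - (y d).toNat := by cases y d <;> simp
        omega
      rcases hA with rfl | rfl
      · exact hmem d hd
      · exact hmem _ ((s3v1 d).trans hd)
  have hrange : Set.range (palette G c) ⊆
      (({{n | n / 2 = 0}, {n | n / 2 = 1}, {n | n / 2 = 0 ∨ n / 2 = 1}} : Finset (Set ℕ)) :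
        Set (Set ℕ)) := by
    rintro _ ⟨v, rfl⟩
    rw [hpal v]
    have hpos : 0 < (univ.filter (fun d : G.Dart => d.fst = v)).card := by
      rw [hcard]; exact hiso v
    obtain ⟨d, hd⟩ := Finset.card_pos.1 hpos
    simp only [mem_filter, mem_univ, true_and] at hd
    simp only [Finset.coe_insert, Finset.coe_singleton, Set.mem_insert_iff,
      Set.mem_singleton_iff]
    by_cases h0 : ∃ d : G.Dart, d.fst = v ∧ x d = false
    · by_cases h1 : ∃ d : G.Dart, d.fst = v ∧ x d = true
      · right; right
        obtain ⟨a, ha, ha'⟩ := h0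
        obtain ⟨b, hb, hb'⟩ := h1
        ext n
        constructor
        · rintro ⟨d, _, h⟩
          cases hx : x d <;> rw [hx] at h
          · left; exact h
          · right; exact h
        · rintro (h | h)
          · exact ⟨a, ha, by rw [ha', h]; rfl⟩
          · exact ⟨b, hb, by rw [hb', h]; rfl⟩
      · left
        obtain ⟨a, ha, ha'⟩ := h0
        ext n
        constructor
        · rintro ⟨d, hd, h⟩
          cases hx : x d
          · rw [hx] at h; exact h
          · exact absurd ⟨d, hd, hx⟩ h1
        · intro h
          exact ⟨a, ha, by rw [ha']; exact h⟩
    · right; left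
      ext n
      constructor
      · rintro ⟨d, hd, h⟩
        cases hx : x d
        · exact absurd ⟨d, hd, hx⟩ h0
        · rw [hx] at h; exact h
      · intro h
        refine ⟨d, hd, ?_⟩
        cases hx : x d
        · exact absurd ⟨d, hd, hx⟩ h0
        · exact h
  calc paletteIndex G ≤ (Set.range (palette G c)).ncard := Nat.sInf_le ⟨c, hproper, rfl⟩
    _ ≤ _ := Set.ncard_le_ncard hrange (Finset.finite_toSet _)
    _ ≤ 3 := by rw [Set.ncard_coe_finset]; exact Finset.card_le_three
end

section
/- If G is a finite bipartite graph with no isolated vertices and maximum degree 4, then š(G) ≤ 11; moreover, if in addition G has no vertices of degree 1, then š(G) ≤ 7. -/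
open SimpleGraph Finset

/-- A fixed-point-free pair of involutions admits a 2-coloring. -/
lemma inv_color {X : Type*} (a b : Equiv.Perm X) (ha : ∀ x, a (a x) = x) (hb : ∀ x, b (b x) = x)
    (ha' : ∀ x, a x ≠ x) (hb' : ∀ x, b x ≠ x) :
    ∃ f : X → Bool, (∀ x, f (a x) = !f x) ∧ ∀ x, f (b x) = !f x := by
  classical
  set s : Equiv.Perm X := a * b with hs
  have haa : a⁻¹ = a := by
    ext x; rw [Equiv.Perm.inv_eq_iff_eq, ha]
  have hbb : b⁻¹ = b := by
    ext x; rw [Equiv.Perm.inv_eq_iff_eq, hb]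
  have hconj : a * s * a⁻¹ = s⁻¹ := by
    rw [hs, mul_inv_rev, haa, hbb]
    ext x; simp [ha]
  have hpow : ∀ (k : ℤ) (x : X), a ((s ^ k) x) = (s ^ (-k)) (a x) := by
    intro k x
    have h : a * s ^ k * a⁻¹ = s ^ (-k) := by
      rw [← conj_zpow, hconj, inv_zpow, zpow_neg]
    rw [← h]; simp
  have hne : ∀ x, ¬ s.SameCycle x (a x) := by
    rintro x ⟨k, hk⟩
    rcases Int.even_or_odd' k with ⟨m, hm | hm⟩
    · apply ha' ((s ^ m) x)
      rw [hpow, ← hk, ← Equiv.Perm.mul_apply, ← zpow_add, hm]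
      congr 2; ring
    · apply hb' ((s ^ m) x)
      have : a ((s ^ m) x) = s ((s ^ m) x) := by
        rw [hpow, ← hk, ← Equiv.Perm.mul_apply, ← zpow_add, hm, ← Equiv.Perm.mul_apply, ← zpow_one_add]
        congr 2; ring
      rw [hs, Equiv.Perm.mul_apply] at this
      exact (a.injective this).symm
  have hcyc : ∀ x y, s.SameCycle x y → s.SameCycle (a x) (a y) := by
    rintro x y ⟨k, hk⟩
    exact ⟨-k, by rw [← hpow, hk]⟩
  let Q := Quotient (Equiv.Perm.SameCycle.setoid s)
  let _ : LinearOrder Q := linearOrderOfSTO WellOrderingRel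
  let q : X → Q := fun x => Quotient.mk _ x
  have hq : ∀ x y, q x = q y ↔ s.SameCycle x y := fun x y => Quotient.eq
  have h1 : ∀ x, q (b x) = q (a x) := by
    intro x
    rw [hq]
    have h : s.SameCycle x (s x) := ⟨1, by simp⟩
    have h2 := (hcyc _ _ h).symm
    rw [hs, Equiv.Perm.mul_apply, ha] at h2
    exact h2
  have h2 : ∀ x, q (a (b x)) = q x := by
    intro x
    rw [hq]
    exact (show s.SameCycle x (s x) from ⟨1, by simp⟩).symm
  have h3 : ∀ x, q x ≠ q (a x) := fun x h => hne x ((hq _ _).1 h)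
  refine ⟨fun x => decide (q x < q (a x)), fun x => ?_, fun x => ?_⟩
  · change decide (q (a x) < q (a (a x))) = !decide (q x < q (a x))
    rw [ha]
    rcases lt_or_gt_of_ne (h3 x) with h | h
    · simp [h, h.le]
    · simp [h, h.le]
  · change decide (q (b x) < q (a (b x))) = !decide (q x < q (a x))
    rw [h1, h2]
    rcases lt_or_gt_of_ne (h3 x) with h | h
    · simp [h, h.le]
    · simp [h, h.le]

lemma inv_color' {X : Type*} (a b : Equiv.Perm X) (ha : ∀ x, a (a x) = x) (hb : ∀ x, b (b x) = x)
    (ha' : ∀ x, a x ≠ x) :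
    ∃ f : X → Bool, (∀ x, f (a x) = !f x) ∧ ∀ x, b x ≠ x → f (b x) = !f x := by
  classical
  let A : X × Bool → X × Bool := fun p => (a p.1, p.2)
  let B : X × Bool → X × Bool := fun p => if b p.1 = p.1 then (p.1, !p.2) else (b p.1, p.2)
  have hA : Function.Involutive A := by
    rintro ⟨x, i⟩; simp [A, ha]
  have hB : Function.Involutive B := by
    rintro ⟨x, i⟩
    by_cases h : b x = x
    · simp [B, h]
    · have : ¬ x = b x := fun h' => h h'.symm
      simp [B, h, hb, this]
  obtain ⟨f, h1, h2⟩ := inv_color hA.toPerm hB.toPerm hA hB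
    (by rintro ⟨x, i⟩ h; exact ha' x (congrArg Prod.fst h))
    (by
      rintro ⟨x, i⟩ h
      by_cases h' : b x = x
      · simp [B, h'] at h
      · simp [B, h'] at h)
  refine ⟨fun x => f (x, true), fun x => h1 (x, true), fun x hx => ?_⟩
  have := h2 (x, true)
  simpa [B, hx] using this

/-- Pairing inside the fibres of `κ` with at most one fixed point in each. -/
lemma exists_pairing_s5 {X K : Type*} [Fintype X] (κ : X → K) :
    ∃ b : Equiv.Perm X, (∀ x, b (b x) = x) ∧ (∀ x, κ (b x) = κ x) ∧
      ∀ x y, κ x = κ y → b x = x → b y = y → x = y := by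
  classical
  let S : Set (Equiv.Perm X) := {b | (∀ x, b (b x) = x) ∧ (∀ x, κ (b x) = κ x)}
  have hS : S.Nonempty := ⟨1, by simp [S]⟩
  obtain ⟨b, ⟨hb1, hb2⟩, hmin⟩ := Set.exists_min_image S
    (fun b => (Finset.univ.filter (fun x => b x = x)).card) (Set.toFinite _) hS
  refine ⟨b, hb1, hb2, fun x y hxy hx hy => ?_⟩
  by_contra hne
  let B : X → X := fun z => if z = x then y else if z = y then x else b z
  have hbx : ∀ z, b z = x → z = x := fun z hz => by rw [← hb1 z, hz, hx]
  have hby : ∀ z, b z = y → z = y := fun z hz => by rw [← hb1 z, hz, hy]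
  have hB : Function.Involutive B := by
    intro z
    by_cases h1 : z = x
    · simp [B, h1]
    · by_cases h2 : z = y
      · simp [B, h2]
      · have h3 : b z ≠ x := fun h => h1 (hbx z h)
        have h4 : b z ≠ y := fun h => h2 (hby z h)
        simp [B, h1, h2, h3, h4, hb1]
  have hmem : hB.toPerm ∈ S := by
    refine ⟨hB, fun z => ?_⟩
    change κ (B z) = κ z
    by_cases h1 : z = x
    · simp [B, h1, hxy]
    · by_cases h2 : z = y
      · have h3 : ¬ y = x := fun h => hne h.symm
        simp only [B, h2, if_neg h3, if_true, hxy]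
      · simp [B, h1, h2, hb2]
  have h := hmin _ hmem
  apply absurd h
  rw [not_le]
  apply Finset.card_lt_card
  rw [Finset.ssubset_iff_of_subset]
  · refine ⟨x, by simp [hx], ?_⟩
    simp only [Finset.mem_filter, Finset.mem_univ, true_and]
    change ¬ B x = x
    simp only [B, if_true]
    exact fun h => hne h.symm
  · intro z
    simp only [Finset.mem_filter, Finset.mem_univ, true_and]
    change B z = z → _
    intro hz
    by_cases h1 : z = x
    · rw [h1, hx]
    · by_cases h2 : z = y
      · rw [h2, hy]
      · simpa [B, h1, h2] using hz

lemma balanced_s5 {X K : Type*} [Fintype X] [DecidableEq K] (κ : X → K) (a : X → X)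
    (ha : Function.Involutive a) (ha' : ∀ x, a x ≠ x) :
    ∃ f : X → Bool, (∀ x, f (a x) = !f x) ∧ ∀ k c,
      (Finset.univ.filter (fun x => κ x = k ∧ f x = c)).card ≤
      (Finset.univ.filter (fun x => κ x = k ∧ f x = !c)).card + 1 := by
  classical
  obtain ⟨b, hb1, hb2, hb3⟩ := exists_pairing_s5 κ
  obtain ⟨f, hf1, hf2⟩ := inv_color' ha.toPerm b ha hb1 ha'
  refine ⟨f, hf1, fun k c => ?_⟩
  rw [← Finset.card_filter_add_card_filter_not (s := Finset.univ.filter (fun x => κ x = k ∧ f x = c))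
    (fun x => b x ≠ x)]
  apply Nat.add_le_add
  · apply Finset.card_le_card_of_injOn b
    · intro x hx
      simp only [Finset.coe_filter, Finset.mem_filter, Finset.mem_univ, true_and,
        Set.mem_ofPred_eq] at hx ⊢
      exact ⟨by rw [hb2, hx.1.1], by rw [hf2 x hx.2, hx.1.2]⟩
    · exact b.injective.injOn
  · rw [Finset.card_le_one]
    intro x hx y hy
    simp only [Finset.mem_filter, Finset.mem_univ, true_and, not_not] at hx hy
    exact hb3 x y (hx.1.1.trans hy.1.1.symm) hx.2 hy.2

/-- Key combinatorial statement. -/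
lemma dart_coloring {V : Type*} [Fintype V] (G : SimpleGraph V) [DecidableRel G.Adj]
    [DecidableEq V] (hbip : G.Colorable 2) (hmax : ∀ v, G.degree v ≤ 4) :
    ∃ C : G.Dart → Bool × Bool, (∀ d, C d.symm = C d) ∧
      (∀ d d' : G.Dart, d.fst = d'.fst → C d = C d' → d = d') ∧
      (∀ d d' : G.Dart, d.fst = d'.fst → G.degree d.fst = 2 → (C d).1 = (C d').1) := by
  classical
  have hinv : Function.Involutive (SimpleGraph.Dart.symm : G.Dart → G.Dart) :=
    SimpleGraph.Dart.symm_involutive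
  have hne : ∀ d : G.Dart, d.symm ≠ d := SimpleGraph.Dart.symm_ne
  -- splitting counts
  have split : ∀ (p : G.Dart → Prop) [DecidablePred p] (u : G.Dart → Bool),
      (Finset.univ.filter (fun d => p d)).card =
        (Finset.univ.filter (fun d => p d ∧ u d = true)).card +
        (Finset.univ.filter (fun d => p d ∧ u d = false)).card := by
    intro p _ u
    rw [← Finset.card_filter_add_card_filter_not (s := Finset.univ.filter (fun d => p d))
      (fun d => u d = true), Finset.filter_filter, Finset.filter_filter]
    simp
  have hdeg : ∀ v, (Finset.univ.filter (fun d : G.Dart => d.fst = v)).card = G.degree v :=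
    fun v => G.dart_fst_fiber_card_eq_degree v
  obtain ⟨f, hf1, hf2⟩ := balanced_s5 (fun d : G.Dart => d.fst) _ hinv hne
  obtain ⟨h, hh1, hh2⟩ := balanced_s5
    (fun d : G.Dart => (d.fst, if G.degree d.fst ≤ 2 then true else f d)) _ hinv hne
  let g : G.Dart → Bool := fun d => xor (f d) (h d)
  have hg1 : ∀ d, g d.symm = g d := by
    intro d; simp only [g, hf1, hh1]; cases f d <;> cases h d <;> rfl
  have key : ∀ v, (∀ c, (Finset.univ.filter (fun d : G.Dart => d.fst = v ∧ g d = c)).card ≤ 2) ∧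
      (G.degree v = 2 → ∀ c,
        (Finset.univ.filter (fun d : G.Dart => d.fst = v ∧ g d = c)).card ≠ 1) := by
    intro v
    have e0 := hdeg v
    have e1 := split (fun d => d.fst = v) f
    have e2 := split (fun d => d.fst = v) h
    have e3 := split (fun d => d.fst = v) g
    have f1 := split (fun d => d.fst = v ∧ f d = true) h
    have f2 := split (fun d => d.fst = v ∧ f d = false) h
    have f3 := split (fun d => d.fst = v ∧ h d = true) f
    have f4 := split (fun d => d.fst = v ∧ h d = false) f
    have g1 := split (fun d => d.fst = v ∧ g d = true) f
    have g2 := split (fun d => d.fst = v ∧ g d = false) f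
    have b1 := hf2 v true
    have b2 := hf2 v false
    have i1 : (Finset.univ.filter (fun d : G.Dart => (d.fst = v ∧ h d = true) ∧ f d = true)) =
      (Finset.univ.filter (fun d : G.Dart => (d.fst = v ∧ f d = true) ∧ h d = true)) := by
      ext d; simp; tauto
    have i2 : (Finset.univ.filter (fun d : G.Dart => (d.fst = v ∧ h d = true) ∧ f d = false)) =
      (Finset.univ.filter (fun d : G.Dart => (d.fst = v ∧ f d = false) ∧ h d = true)) := by
      ext d; simp; tauto
    have i3 : (Finset.univ.filter (fun d : G.Dart => (d.fst = v ∧ h d = false) ∧ f d = true)) =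
      (Finset.univ.filter (fun d : G.Dart => (d.fst = v ∧ f d = true) ∧ h d = false)) := by
      ext d; simp; tauto
    have i4 : (Finset.univ.filter (fun d : G.Dart => (d.fst = v ∧ h d = false) ∧ f d = false)) =
      (Finset.univ.filter (fun d : G.Dart => (d.fst = v ∧ f d = false) ∧ h d = false)) := by
      ext d; simp; tauto
    have j1 : (Finset.univ.filter (fun d : G.Dart => (d.fst = v ∧ g d = true) ∧ f d = true)) =
      (Finset.univ.filter (fun d : G.Dart => (d.fst = v ∧ f d = true) ∧ h d = false)) := by
      ext d; simp only [g, Finset.mem_filter, Finset.mem_univ, true_and]; cases f d <;> cases h d <;> simp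
    have j2 : (Finset.univ.filter (fun d : G.Dart => (d.fst = v ∧ g d = true) ∧ f d = false)) =
      (Finset.univ.filter (fun d : G.Dart => (d.fst = v ∧ f d = false) ∧ h d = true)) := by
      ext d; simp only [g, Finset.mem_filter, Finset.mem_univ, true_and]; cases f d <;> cases h d <;> simp
    have j3 : (Finset.univ.filter (fun d : G.Dart => (d.fst = v ∧ g d = false) ∧ f d = true)) =
      (Finset.univ.filter (fun d : G.Dart => (d.fst = v ∧ f d = true) ∧ h d = true)) := by
      ext d; simp only [g, Finset.mem_filter, Finset.mem_univ, true_and]; cases f d <;> cases h d <;> simp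
    have j4 : (Finset.univ.filter (fun d : G.Dart => (d.fst = v ∧ g d = false) ∧ f d = false)) =
      (Finset.univ.filter (fun d : G.Dart => (d.fst = v ∧ f d = false) ∧ h d = false)) := by
      ext d; simp only [g, Finset.mem_filter, Finset.mem_univ, true_and]; cases f d <;> cases h d <;> simp
    rw [i1, i2] at f3
    rw [i3, i4] at f4
    rw [j1, j2] at g1
    rw [j3, j4] at g2
    have hm := hmax v
    simp only [Bool.not_true, Bool.not_false] at b1 b2
    by_cases hd : G.degree v ≤ 2
    · have k0 : ∀ c, (Finset.univ.filter (fun d : G.Dart =>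
          (d.fst, if G.degree d.fst ≤ 2 then true else f d) = (v, true) ∧ h d = c)) =
          (Finset.univ.filter (fun d : G.Dart => d.fst = v ∧ h d = c)) := by
        intro c
        apply Finset.filter_congr
        intro d _
        constructor
        · rintro ⟨h1, h2⟩; exact ⟨congrArg Prod.fst h1, h2⟩
        · rintro ⟨h1, h2⟩; exact ⟨by rw [h1, if_pos hd], h2⟩
      have c1 := hh2 (v, true) true
      have c2 := hh2 (v, true) false
      rw [k0, k0] at c1 c2
      simp only [Bool.not_true, Bool.not_false] at c1 c2
      refine ⟨fun c => ?_, fun h2 c => ?_⟩ <;> cases c <;> omega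
    · have k0 : ∀ a c, (Finset.univ.filter (fun d : G.Dart =>
          (d.fst, if G.degree d.fst ≤ 2 then true else f d) = (v, a) ∧ h d = c)) =
          (Finset.univ.filter (fun d : G.Dart => (d.fst = v ∧ f d = a) ∧ h d = c)) := by
        intro a c
        apply Finset.filter_congr
        intro d _
        constructor
        · rintro ⟨h1, h2⟩
          have h3 : d.fst = v := congrArg Prod.fst h1
          have h4 := congrArg Prod.snd h1
          have h5 : ¬ G.degree d.fst ≤ 2 := by rw [h3]; exact hd
          simp only [if_neg h5] at h4
          exact ⟨⟨h3, h4⟩, h2⟩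
        · rintro ⟨⟨h1, h3⟩, h2⟩; exact ⟨by rw [h1, if_neg hd, h3], h2⟩
      have c1 := hh2 (v, true) true
      have c2 := hh2 (v, true) false
      have c3 := hh2 (v, false) true
      have c4 := hh2 (v, false) false
      rw [k0, k0] at c1 c2 c3 c4
      simp only [Bool.not_true, Bool.not_false] at c1 c2 c3 c4
      refine ⟨fun c => ?_, fun h2 c => ?_⟩ <;> cases c <;> omega
  obtain ⟨l, hl1, hl2⟩ := balanced_s5 (fun d : G.Dart => (d.fst, g d)) _ hinv hne
  obtain ⟨s⟩ := hbip
  let t : V → Bool := fun v => decide (s v = 0)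
  have ht : ∀ d : G.Dart, t d.snd = !t d.fst := by
    intro d
    have h1 := s.valid d.adj
    simp only [t]
    generalize s d.fst = x at h1 ⊢
    generalize s d.snd = y at h1 ⊢
    revert x y; decide
  refine ⟨fun d => (g d, xor (l d) (t d.fst)), fun d => ?_, fun d d' h1 h2 => ?_,
    fun d d' h1 h2 => ?_⟩
  · have : d.symm.fst = d.snd := rfl
    simp only [hg1, hl1, this, ht]
    cases l d <;> cases t d.fst <;> rfl
  · simp only [Prod.mk.injEq, h1] at h2
    obtain ⟨h2, h3⟩ := h2
    have h3 : l d = l d' := by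
      revert h3; cases l d <;> cases l d' <;> cases t d'.fst <;> simp
    have m1 := (key d'.fst).1 (g d')
    have m2 := split (fun d => d.fst = d'.fst ∧ g d = g d') l
    have m3 := hl2 (d'.fst, g d') true
    have m4 := hl2 (d'.fst, g d') false
    have k0 : ∀ c, (Finset.univ.filter (fun d : G.Dart =>
        (d.fst, g d) = (d'.fst, g d') ∧ l d = c)) =
        (Finset.univ.filter (fun d : G.Dart => (d.fst = d'.fst ∧ g d = g d') ∧ l d = c)) := by
      intro c
      apply Finset.filter_congr
      intro d _
      rw [Prod.mk.injEq]
    rw [k0, k0] at m3 m4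
    simp only [Bool.not_true, Bool.not_false] at m3 m4
    have m5 : (Finset.univ.filter (fun d : G.Dart =>
      (d.fst = d'.fst ∧ g d = g d') ∧ l d = l d')).card ≤ 1 := by
      cases l d' <;> omega
    rw [Finset.card_le_one] at m5
    exact m5 d (by simp [h1, h2, h3]) d' (by simp)
  · change g d = g d'
    by_contra hgg
    have m1 := (key d.fst).2 h2 true
    have m2 := (key d.fst).2 h2 false
    have m3 := split (fun d' => d'.fst = d.fst) g
    rw [hdeg, h2] at m3
    have n1 : 0 < (Finset.univ.filter (fun d' : G.Dart => d'.fst = d.fst ∧ g d' = g d)).card :=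
      Finset.card_pos.2 ⟨d, by simp⟩
    have n2 : 0 < (Finset.univ.filter (fun d'' : G.Dart => d''.fst = d.fst ∧ g d'' = g d')).card :=
      Finset.card_pos.2 ⟨d', by simp [h1]⟩
    revert n1 n2 hgg
    cases g d <;> cases g d' <;> simp only [not_true, false_implies, imp_false] <;> intros <;> omega

def goodSets : Finset (Finset (Bool × Bool)) :=
  Finset.univ.filter fun S => S.Nonempty ∧
    (S.card = 2 → ∀ x ∈ S, ∀ y ∈ S, x.1 = y.1)

lemma goodSets_card : goodSets.card = 11 := by decide

lemma goodSets_card' : (goodSets.filter (fun S => S.card ≠ 1)).card = 7 := by decide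

def colCode (p : Bool × Bool) : ℕ := 2 * p.1.toNat + p.2.toNat

lemma colCode_inj : Function.Injective colCode := by
  intro x y; revert x y; decide

lemma exists_coloring {V : Type*} [Fintype V] (G : SimpleGraph V) [DecidableRel G.Adj]
    (hbip : G.Colorable 2) (hiso : ∀ v, 0 < G.degree v) (hmax : ∀ v, G.degree v ≤ 4) :
    ∃ c : Sym2 V → ℕ, IsProperEdgeColoring G c ∧
      ∀ v, ∃ S ∈ goodSets, S.card = G.degree v ∧ palette G c v = colCode '' (S : Set (Bool × Bool)) := by
  classical
  obtain ⟨C, h1, h2, h3⟩ := dart_coloring G hbip hmax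
  let c : Sym2 V → ℕ := fun e => if h : ∃ d : G.Dart, d.edge = e then colCode (C h.choose) else 0
  have hc : ∀ d : G.Dart, c d.edge = colCode (C d) := by
    intro d
    have h : ∃ d' : G.Dart, d'.edge = d.edge := ⟨d, rfl⟩
    simp only [c, dif_pos h]
    rcases (SimpleGraph.dart_edge_eq_iff _ _).1 h.choose_spec with h' | h'
    · rw [h']
    · rw [h', h1]
  have hd : ∀ e ∈ G.edgeSet, ∀ v ∈ e, ∃ d : G.Dart, d.edge = e ∧ d.fst = v := by
    intro e he v hv
    obtain ⟨w, rfl⟩ := hv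
    exact ⟨⟨(v, w), he⟩, rfl, rfl⟩
  refine ⟨c, ?_, fun v => ?_⟩
  · rintro e₁ he₁ e₂ he₂ hne ⟨v, hv1, hv2⟩ heq
    obtain ⟨d, rfl, hd1⟩ := hd e₁ he₁ v hv1
    obtain ⟨d', rfl, hd2⟩ := hd e₂ he₂ v hv2
    rw [hc, hc] at heq
    exact hne (by rw [h2 d d' (hd1.trans hd2.symm) (colCode_inj heq)])
  · let S : Finset (Bool × Bool) := (Finset.univ.filter (fun d : G.Dart => d.fst = v)).image C
    have hS : S.card = G.degree v := by
      rw [← G.dart_fst_fiber_card_eq_degree v]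
      apply Finset.card_image_of_injOn
      intro d hd d' hd' h
      simp only [Finset.coe_filter, Finset.mem_univ, true_and, Set.mem_ofPred_eq] at hd hd'
      exact h2 d d' (hd.trans hd'.symm) h
    refine ⟨S, ?_, hS, ?_⟩
    · simp only [goodSets, Finset.mem_filter, Finset.mem_univ, true_and]
      refine ⟨Finset.card_pos.1 (hS ▸ hiso v), fun hcard x hx y hy => ?_⟩
      simp only [S, Finset.mem_image, Finset.mem_filter, Finset.mem_univ, true_and] at hx hy
      obtain ⟨d, hd, rfl⟩ := hx
      obtain ⟨d', hd', rfl⟩ := hy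
      exact h3 d d' (hd.trans hd'.symm) (by rw [hd, ← hS, hcard])
    · ext n
      simp only [palette, Set.mem_ofPred_eq, Set.mem_image, Finset.mem_coe, S, Finset.mem_image,
        Finset.mem_filter, Finset.mem_univ, true_and]
      constructor
      · rintro ⟨e, he, hv, rfl⟩
        obtain ⟨d, rfl, hd1⟩ := hd e he v hv
        exact ⟨C d, ⟨d, hd1, rfl⟩, (hc d).symm⟩
      · rintro ⟨_, ⟨d, hd1, rfl⟩, rfl⟩
        refine ⟨d.edge, d.edge_mem, ?_, hc d⟩
        rw [← hd1]
        exact Sym2.mem_mk_left _ _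

lemma paletteIndex_le {V : Type*} (G : SimpleGraph V) (c : Sym2 V → ℕ)
    (hc : IsProperEdgeColoring G c) (T : Finset (Finset (Bool × Bool)))
    (h : ∀ v, ∃ S ∈ T, palette G c v = colCode '' (S : Set (Bool × Bool))) :
    paletteIndex G ≤ T.card := by
  classical
  have h0 : paletteIndex G ≤ (Set.range (palette G c)).ncard := Nat.sInf_le ⟨c, hc, rfl⟩
  refine h0.trans ?_
  let F : Finset (Bool × Bool) → Set ℕ := fun S => colCode '' (S : Set (Bool × Bool))
  have hsub : Set.range (palette G c) ⊆ F '' (T : Set (Finset (Bool × Bool))) := by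
    rintro _ ⟨v, rfl⟩
    obtain ⟨S, hS, h⟩ := h v
    exact ⟨S, hS, h.symm⟩
  calc _ ≤ (F '' (T : Set (Finset (Bool × Bool)))).ncard :=
        Set.ncard_le_ncard hsub (T.finite_toSet.image _)
    _ ≤ (T : Set (Finset (Bool × Bool))).ncard := Set.ncard_image_le T.finite_toSet
    _ = T.card := Set.ncard_coe_finset T

/-- If `G` is a bipartite graph with `Δ(G) = 4` and no isolated vertices, then
`š(G) ≤ 11`; moreover if `G` has no pendant (degree-one) vertices, then `š(G) ≤ 7`. -/
theorem palette_index_bipartite_deg4 {V : Type*} [Fintype V]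
    (G : SimpleGraph V) [DecidableRel G.Adj]
    (hbip : G.Colorable 2)
    (hiso : ∀ v : V, 0 < G.degree v)
    (hmax : G.maxDegree = 4) :
    paletteIndex G ≤ 11 ∧ ((∀ v : V, G.degree v ≠ 1) → paletteIndex G ≤ 7) := by
  obtain ⟨c, hc, hp⟩ := exists_coloring G hbip hiso
    (fun v => (G.degree_le_maxDegree v).trans hmax.le)
  refine ⟨?_, fun h1 => ?_⟩
  · rw [← goodSets_card]
    refine paletteIndex_le G c hc _ fun v => ?_
    obtain ⟨S, hS, _, h⟩ := hp v
    exact ⟨S, hS, h⟩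
  · rw [← goodSets_card']
    refine paletteIndex_le G c hc _ fun v => ?_
    obtain ⟨S, hS, hcard, h⟩ := hp v
    exact ⟨S, Finset.mem_filter.2 ⟨hS, by rw [hcard]; exact h1 v⟩, h⟩
end

section
/- If G is a finite bipartite graph with no isolated vertices and maximum degree 5, then š(G) ≤ 23; moreover, if in addition G has a perfect matching, then š(G) ≤ 12. -/
open SimpleGraph Finset

open Classical in
lemma aux_invol {E K : Type*} [Fintype E] (k : E → K) :
    ∃ α : Equiv.Perm E, (∀ e, α (α e) = e) ∧ (∀ e, k (α e) = k e) ∧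
      ∀ a b, k a = k b → α a = a → α b = b → a = b := by
  let P : Set (Equiv.Perm E) := {α | (∀ e, α (α e) = e) ∧ (∀ e, k (α e) = k e)}
  have hne : P.Nonempty := ⟨1, by simp [P]⟩
  obtain ⟨α, hα, hmin⟩ := Set.exists_min_image P
    (fun α => (univ.filter (fun e => α e = e)).card) (Set.toFinite P) hne
  refine ⟨α, hα.1, hα.2, ?_⟩
  intro a b hk ha hb
  by_contra hab
  have hinj : ∀ x y, α x = y → x = α y := fun x y h => by rw [← h, hα.1]
  have hv : ∀ e, (α * Equiv.swap a b) e = if e = a then b else if e = b then a else α e := by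
    intro e
    simp only [Equiv.Perm.mul_apply, Equiv.swap_apply_def]
    split_ifs with h1 h2
    · exact hb
    · exact ha
    · rfl
  have hmem : (α * Equiv.swap a b) ∈ P := by
    have h1 := hα.1
    have h2 := hα.2
    constructor
    · intro e
      simp only [hv]
      have := hinj e
      grind
    · intro e
      simp only [hv]
      grind
  have := hmin _ hmem
  have hlt : (univ.filter (fun e => (α * Equiv.swap a b) e = e)).card <
      (univ.filter (fun e => α e = e)).card := by
    apply Finset.card_lt_card
    rw [Finset.ssubset_iff_of_subset]
    · refine ⟨a, by simp [ha], ?_⟩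
      simp only [mem_filter, mem_univ, true_and, hv]
      simpa using Ne.symm hab
    · intro e
      simp only [mem_filter, mem_univ, true_and, hv]
      grind
  omega

lemma aux_free {E : Type*} (α β : Equiv.Perm E) (hα : ∀ e, α (α e) = e)
    (hβ : ∀ e, β (β e) = e) (fα : ∀ e, α e ≠ e) (fβ : ∀ e, β e ≠ e) :
    ∃ f : E → Bool, (∀ e, f (α e) = !f e) ∧ (∀ e, f (β e) = !f e) := by
  classical
  let g : Equiv.Perm E := α * β
  have hginv : g⁻¹ = β * α := by
    rw [inv_eq_iff_mul_eq_one]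
    ext e; simp [g, hα, hβ]
  have hconj : α * g * α⁻¹ = g⁻¹ := by
    rw [hginv]; 
    ext e
    have : α⁻¹ e = α e := by rw [Equiv.Perm.inv_eq_iff_eq, hα]
    simp only [Equiv.Perm.mul_apply, this, g, hα]
  have hconjz : ∀ (m : ℤ) e, α ((g ^ m) e) = (g ^ (-m)) (α e) := by
    intro m e
    have h := conj_zpow (a := α) (b := g) (i := m)
    rw [hconj, inv_zpow, ← zpow_neg] at h
    rw [h]; simp
  let s : Setoid E := Equiv.Perm.SameCycle.setoid g
  have hdiff : ∀ e, ¬ g.SameCycle e (α e) := by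
    rintro e ⟨k, hk⟩
    rcases Int.even_or_odd' k with ⟨m, rfl | rfl⟩
    · apply fα ((g ^ m) e)
      rw [hconjz, ← hk, ← Equiv.Perm.mul_apply, ← zpow_add]
      congr 2; ring
    · apply fβ ((g ^ m) e)
      apply α.injective
      have : α (β ((g ^ m) e)) = (g ^ (1 + m)) e := by
        rw [zpow_add, zpow_one]; rfl
      rw [this, hconjz, ← hk, ← Equiv.Perm.mul_apply, ← zpow_add]
      congr 2; ring
  let q : E → Quotient s := Quotient.mk s
  have hq : ∀ a b, g.SameCycle a b → q a = q b := fun a b h => Quotient.sound h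
  have hq' : ∀ e, q e ≠ q (α e) := fun e h => hdiff e (Quotient.exact h)
  let _ : LinearOrder (Quotient s) := linearOrderOfSTO (WellOrderingRel)
  have h1 : ∀ e, q (β e) = q (α e) := by
    intro e
    apply hq
    refine ⟨1, ?_⟩
    simp [g, hβ]
  have h2 : ∀ e, q (α (β e)) = q e := by
    intro e
    symm; apply hq
    exact ⟨1, by simp [g]⟩
  have key : ∀ a b : Quotient s, a ≠ b → decide (b < a) = !decide (a < b) := by
    intro a b h
    rcases lt_or_gt_of_ne h with h | h
    · simp [h, h.le]
    · simp [h, h.le]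
  refine ⟨fun e => decide (q e < q (α e)), fun e => ?_, fun e => ?_⟩
  · simp only [hα]; exact key _ _ (hq' e)
  · simp only [h1, h2]; exact key _ _ (hq' e)

lemma aux_double {E : Type*} (α : Equiv.Perm E) (hα : ∀ e, α (α e) = e) :
    ∃ α' : Equiv.Perm (E × Bool), (∀ e, α' (α' e) = e) ∧ (∀ e, α' e ≠ e) ∧
      ∀ e, α e ≠ e → ∀ b, α' (e, b) = (α e, b) := by
  classical
  let h : E × Bool → E × Bool := fun p => if α p.1 = p.1 then (p.1, !p.2) else (α p.1, p.2)
  have hh : Function.Involutive h := by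
    rintro ⟨e, b⟩
    by_cases he : α e = e
    · simp [h, he]
    · have : ¬ (e = α e) := fun h => he h.symm
      simp [h, he, hα, this]
  refine ⟨hh.toPerm, hh, ?_, ?_⟩
  · rintro ⟨e, b⟩
    by_cases he : α e = e
    · simp [h, he]
    · simp [h, he]
  · intro e he b
    simp [h, he]

lemma aux_two {E : Type*} (α β : Equiv.Perm E) (hα : ∀ e, α (α e) = e)
    (hβ : ∀ e, β (β e) = e) :
    ∃ f : E → Bool, (∀ e, α e ≠ e → f (α e) = !f e) ∧ (∀ e, β e ≠ e → f (β e) = !f e) := by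
  obtain ⟨α', a1, a2, a3⟩ := aux_double α hα
  obtain ⟨β', b1, b2, b3⟩ := aux_double β hβ
  obtain ⟨f, f1, f2⟩ := aux_free α' β' a1 b1 a2 b2
  refine ⟨fun e => f (e, true), fun e he => ?_, fun e he => ?_⟩
  · simp only [← a3 e he, f1]
  · simp only [← b3 e he, f2]

open Classical in
lemma aux_bal_one {E K : Type*} [Fintype E] (k : E → K) (α : Equiv.Perm E)
    (h1 : ∀ e, α (α e) = e) (h2 : ∀ e, k (α e) = k e)
    (h3 : ∀ a b, k a = k b → α a = a → α b = b → a = b) (f : E → Bool)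
    (hf : ∀ e, α e ≠ e → f (α e) = !f e) (x : K) (b : Bool) :
    (univ.filter (fun e => k e = x ∧ f e = b)).card ≤
      (univ.filter (fun e => k e = x ∧ f e = !b)).card + 1 := by
  have hs : univ.filter (fun e => k e = x ∧ f e = b) ⊆
      (univ.filter (fun e => k e = x ∧ f e = !b)).image α ∪
        univ.filter (fun e => k e = x ∧ α e = e) := by
    intro e
    simp only [mem_filter, mem_univ, true_and, mem_union, mem_image]
    rintro ⟨hk, hb⟩
    by_cases he : α e = e
    · exact Or.inr ⟨hk, he⟩
    · exact Or.inl ⟨α e, ⟨by rw [h2, hk], by rw [hf e he, hb]⟩, h1 e⟩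
  refine (Finset.card_le_card hs).trans ((Finset.card_union_le _ _).trans ?_)
  refine add_le_add Finset.card_image_le ?_
  rw [Finset.card_le_one]
  simp only [mem_filter, mem_univ, true_and]
  rintro a ⟨ha, ha'⟩ b ⟨hb, hb'⟩
  exact h3 a b (ha.trans hb.symm) ha' hb'

open Classical in
lemma aux_bal {E K L : Type*} [Fintype E] (k : E → K) (l : E → L) :
    ∃ f : E → Bool, (∀ x b, (univ.filter (fun e => k e = x ∧ f e = b)).card ≤
      (univ.filter (fun e => k e = x ∧ f e = !b)).card + 1) ∧
      (∀ x b, (univ.filter (fun e => l e = x ∧ f e = b)).card ≤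
      (univ.filter (fun e => l e = x ∧ f e = !b)).card + 1) := by
  obtain ⟨α, a1, a2, a3⟩ := aux_invol k
  obtain ⟨β, b1, b2, b3⟩ := aux_invol l
  obtain ⟨f, f1, f2⟩ := aux_two α β a1 b1
  exact ⟨f, aux_bal_one k α a1 a2 a3 f f1, aux_bal_one l β b1 b2 b3 f f2⟩

def goodPal : Finset (Finset (Bool × Bool)) :=
  univ.filter (fun s => s.card ≠ 2 ∨ s = {(true, true), (false, false)} ∨
    s = {(true, false), (false, true)})

lemma goodPal_card : goodPal.card = 12 := by decide

open Classical in
lemma aux_small {E : Type*} (T : Finset E) (f : E → Bool) (hT : T.card ≤ 2)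
    (hb : ∀ b, (T.filter (fun e => f e = b)).card ≤ (T.filter (fun e => f e = !b)).card + 1)
    (a c : E) (ha : a ∈ T) (hc : c ∈ T) (hac : f a = f c) : a = c := by
  by_contra hne
  have h1 : ({a, c} : Finset E) ⊆ T.filter (fun e => f e = f a) := by
    intro e; simp only [mem_insert, mem_singleton, mem_filter]
    rintro (rfl | rfl)
    · exact ⟨ha, rfl⟩
    · exact ⟨hc, hac.symm⟩
  have h2 := Finset.card_le_card h1
  rw [Finset.card_pair hne] at h2
  have h3 := Finset.card_filter_add_card_filter_not (s := T) (fun e => f e = f a)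
  have h4 : T.filter (fun e => ¬ f e = f a) = T.filter (fun e => f e = !f a) := by
    apply Finset.filter_congr; intro e _; cases f e <;> cases f a <;> simp
  rw [h4] at h3
  have := hb (f a)
  omega

open Classical in
lemma aux_local {E : Type*} (S : Finset E) (y z : E → Bool) (hS : S.card ≤ 4)
    (hy : ∀ b, (S.filter (fun e => y e = b)).card ≤ (S.filter (fun e => y e = !b)).card + 1)
    (hz2 : S.card = 2 → ∀ b, (S.filter (fun e => z e = b)).card ≤
      (S.filter (fun e => z e = !b)).card + 1)
    (hz : S.card ≠ 2 → ∀ c b, ((S.filter (fun e => y e = c)).filter (fun e => z e = b)).card ≤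
      ((S.filter (fun e => y e = c)).filter (fun e => z e = !b)).card + 1) :
    Set.InjOn (fun e => (y e, z e)) (S : Set E) ∧ S.image (fun e => (y e, z e)) ∈ goodPal := by
  by_cases h2 : S.card = 2
  · have iy := aux_small S y h2.le hy
    have iz := aux_small S z h2.le (hz2 h2)
    refine ⟨fun a ha c hc h => iy a c ha hc (congrArg Prod.fst h), ?_⟩
    obtain ⟨a, c, hac, rfl⟩ := Finset.card_eq_two.1 h2
    have i1 := fun h => hac (iy a c (by simp) (by simp) h)
    have i2 := fun h => hac (iz a c (by simp) (by simp) h)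
    rw [Finset.image_insert, Finset.image_singleton]
    generalize y a = p at *
    generalize y c = q at *
    generalize z a = r at *
    generalize z c = s at *
    revert p q r s
    decide
  · have hinj : Set.InjOn (fun e => (y e, z e)) (S : Set E) := by
      intro a ha c hc h
      have hyac : y a = y c := congrArg Prod.fst h
      refine aux_small (S.filter (fun e => y e = y a)) z ?_ (hz h2 (y a)) a c
        (by simpa using ha) (by simpa [hyac] using hc) (congrArg Prod.snd h)
      have h3 := Finset.card_filter_add_card_filter_not (s := S) (fun e => y e = y a)
      have h4 : S.filter (fun e => ¬ y e = y a) = S.filter (fun e => y e = !y a) := by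
        apply Finset.filter_congr; intro e _; cases y e <;> cases y a <;> simp
      rw [h4] at h3
      have := hy (y a)
      omega
    refine ⟨hinj, ?_⟩
    simp only [goodPal, mem_filter, mem_univ, true_and]
    left
    rwa [Finset.card_image_of_injOn hinj]

open Classical in
lemma aux_core {E V : Type*} [Fintype E] (k l : E → V)
    (hk : ∀ v, (univ.filter (fun e => k e = v)).card ≤ 4)
    (hl : ∀ v, (univ.filter (fun e => l e = v)).card ≤ 4) :
    ∃ w : E → Bool × Bool,
      (∀ v, Set.InjOn w (univ.filter (fun e => k e = v) : Finset E) ∧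
        (univ.filter (fun e => k e = v)).image w ∈ goodPal) ∧
      (∀ v, Set.InjOn w (univ.filter (fun e => l e = v) : Finset E) ∧
        (univ.filter (fun e => l e = v)).image w ∈ goodPal) := by
  obtain ⟨y, y1, y2⟩ := aux_bal k l
  let r : (E → V) → E → V × Option Bool := fun k e =>
    (k e, if (univ.filter (fun e' => k e' = k e)).card = 2 then none else some (y e))
  obtain ⟨z, z1, z2⟩ := aux_bal (r k) (r l)
  have main : ∀ k : E → V, (∀ v, (univ.filter (fun e => k e = v)).card ≤ 4) →
      (∀ x b, (univ.filter (fun e => k e = x ∧ y e = b)).card ≤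
      (univ.filter (fun e => k e = x ∧ y e = !b)).card + 1) →
      (∀ x b, (univ.filter (fun e => r k e = x ∧ z e = b)).card ≤
      (univ.filter (fun e => r k e = x ∧ z e = !b)).card + 1) →
      ∀ v, Set.InjOn (fun e => (y e, z e)) (univ.filter (fun e => k e = v) : Finset E) ∧
        (univ.filter (fun e => k e = v)).image (fun e => (y e, z e)) ∈ goodPal := by
    intro k hk hy hz v
    apply aux_local _ y z (hk v)
    · intro b
      simp only [Finset.filter_filter]
      exact hy v b
    · intro h2 b
      have h := hz (v, none) b
      have hr : ∀ e, r k e = (v, none) ↔ k e = v := by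
        intro e
        simp only [r, Prod.mk.injEq]
        constructor
        · exact fun h => h.1
        · rintro rfl; simp [h2]
      simp only [hr] at h
      simp only [Finset.filter_filter]
      exact h
    · intro h2 c b
      have h := hz (v, some c) b
      have hr : ∀ e, r k e = (v, some c) ↔ (k e = v ∧ y e = c) := by
        intro e
        simp only [r, Prod.mk.injEq]
        constructor
        · rintro ⟨rfl, h'⟩; simpa [h2] using h'
        · rintro ⟨rfl, rfl⟩; simp [h2]
      simp only [hr] at h
      simp only [Finset.filter_filter]
      exact h
  exact ⟨fun e => (y e, z e), main k hk y1 (fun x b => by convert z1 x b),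
    main l hl y2 (fun x b => by convert z2 x b)⟩

def encC (p : Bool × Bool) : ℕ := 1 + p.1.toNat + 2 * p.2.toNat

lemma encC_inj : Function.Injective encC := by
  unfold Function.Injective; decide

lemma encC_pos (p : Bool × Bool) : encC p ≠ 0 := by
  revert p; decide

open Classical in
lemma aux_color {V : Type*} [Fintype V] (G : SimpleGraph V) (col : V → Bool)
    (hcol : ∀ u v, G.Adj u v → col u ≠ col v) (M : Set (Sym2 V)) (hM : M ⊆ G.edgeSet)
    (hMm : ∀ e ∈ M, ∀ f ∈ M, ∀ v, v ∈ e → v ∈ f → e = f)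
    (hd : ∀ v, (univ.filter (fun e : Sym2 V => e ∈ G.edgeSet ∧ e ∉ M ∧ v ∈ e)).card ≤ 4) :
    ∃ c : Sym2 V → ℕ, IsProperEdgeColoring G c ∧ ∀ v, ∃ s ∈ goodPal,
      palette G c v = (if ∃ e ∈ M, v ∈ e then {0} else ∅) ∪ encC '' (s : Set (Bool × Bool)) := by
  let E := {e : Sym2 V // e ∈ G.edgeSet ∧ e ∉ M}
  have hex : ∀ b : Bool, ∀ e : E, ∃ a, ∀ v, col v = b → (v ∈ e.1 ↔ a = v) := by
    rintro b ⟨e, he, -⟩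
    induction e with | _ u v =>
    have := hcol u v he
    by_cases hu : col u = b
    · refine ⟨u, fun w hw => ?_⟩
      simp only [Sym2.mem_iff]
      constructor
      · rintro (rfl | rfl)
        · rfl
        · exact absurd (hu.trans hw.symm) this
      · rintro rfl; simp
    · refine ⟨v, fun w hw => ?_⟩
      simp only [Sym2.mem_iff]
      constructor
      · rintro (rfl | rfl)
        · exact absurd hw hu
        · rfl
      · rintro rfl; simp
  choose kk hkk using hex
  have hfib : ∀ v, (univ.filter (fun e : E => v ∈ e.1)).card ≤ 4 := by
    intro v
    refine le_trans ?_ (hd v)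
    apply Finset.card_le_card_of_injOn Subtype.val
    · intro e he
      simp only [coe_filter, mem_univ, true_and, Set.mem_ofPred_eq] at he ⊢
      exact ⟨e.2.1, e.2.2, he⟩
    · exact Subtype.val_injective.injOn
  -- keys, made harmless on the wrong side
  let key : Bool → E → Option V := fun b e => if col (kk b e) = b then some (kk b e) else none
  have hkcol : ∀ b e, col (kk b e) = b := by
    intro b e
    obtain ⟨⟨e, he, hM⟩, rfl⟩ : ∃ e', e' = e := ⟨e, rfl⟩
    induction e with | _ u v =>
    have h := hcol u v he
    have hu := hkk b ⟨s(u,v), he, hM⟩ u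
    have hv := hkk b ⟨s(u,v), he, hM⟩ v
    by_cases hub : col u = b
    · rw [(hu hub).1 (by simp)]; exact hub
    · have hvb : col v = b := by
        revert h hub; cases col u <;> cases col v <;> cases b <;> simp
      rw [(hv hvb).1 (by simp)]; exact hvb
  have hfil : ∀ b v, col v = b → univ.filter (fun e : E => kk b e = v) =
      univ.filter (fun e : E => v ∈ e.1) := by
    intro b v hv
    apply Finset.filter_congr
    intro e _
    exact (hkk b e v hv).symm
  have hfib' : ∀ b v, (univ.filter (fun e : E => kk b e = v)).card ≤ 4 := by
    intro b v
    by_cases hv : col v = b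
    · rw [hfil b v hv]; exact hfib v
    · have : univ.filter (fun e : E => kk b e = v) = ∅ := by
        apply Finset.filter_eq_empty_iff.2
        rintro e - rfl
        exact hv (hkcol b e)
      rw [this]; simp
  obtain ⟨w, w1, w2⟩ := aux_core (kk true) (kk false) (hfib' true) (hfib' false)
  have hw : ∀ v, Set.InjOn w (univ.filter (fun e : E => v ∈ e.1) : Finset E) ∧
        (univ.filter (fun e : E => v ∈ e.1)).image w ∈ goodPal := by
    intro v
    cases hv : col v with
    | true => rw [← hfil true v hv]; exact w1 v
    | false => rw [← hfil false v hv]; exact w2 v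
  let c : Sym2 V → ℕ := fun e => if h : e ∈ G.edgeSet ∧ e ∉ M then encC (w ⟨e, h⟩) else 0
  have c0 : ∀ e ∈ M, c e = 0 := by
    intro e he
    simp [c, he]
  have c1 : ∀ e (h : e ∈ G.edgeSet ∧ e ∉ M), c e = encC (w ⟨e, h⟩) := by
    intro e h
    simp only [c, dif_pos h]
  refine ⟨c, ?_, ?_⟩
  · rintro e he f hf hne ⟨v, hve, hvf⟩ hc
    by_cases heM : e ∈ M <;> by_cases hfM : f ∈ M
    · exact hne (hMm e heM f hfM v hve hvf)
    · rw [c0 e heM, c1 f ⟨hf, hfM⟩] at hc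
      exact encC_pos _ hc.symm
    · rw [c0 f hfM, c1 e ⟨he, heM⟩] at hc
      exact encC_pos _ hc
    · rw [c1 f ⟨hf, hfM⟩, c1 e ⟨he, heM⟩] at hc
      have := (hw v).1 (by simpa using hve) (by simpa using hvf) (encC_inj hc)
      exact hne (congrArg Subtype.val this)
  · intro v
    refine ⟨_, (hw v).2, ?_⟩
    ext n
    simp only [palette, Set.mem_ofPred_eq, Set.mem_union, Set.mem_image, mem_coe, mem_image,
      mem_filter, mem_univ, true_and]
    constructor
    · rintro ⟨e, he, hve, rfl⟩
      by_cases heM : e ∈ M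
      · left
        rw [if_pos ⟨e, heM, hve⟩, c0 e heM]; rfl
      · right
        exact ⟨_, ⟨⟨e, he, heM⟩, hve, rfl⟩, (c1 e ⟨he, heM⟩).symm⟩
    · rintro (h | ⟨p, ⟨e, hve, rfl⟩, rfl⟩)
      · split_ifs at h with h'
        · obtain ⟨e, he, hve⟩ := h'
          have h0 : n = 0 := h
          exact ⟨e, hM he, hve, by rw [c0 e he, h0]⟩
        · exact absurd h (by simp)
      · exact ⟨e.1, e.2.1, hve, c1 e.1 e.2⟩

open Classical in
lemma aux_perm {V : Type*} [Fintype V] (G : SimpleGraph V)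
    (hdeg : ∀ v, G.degree v ≤ 5) :
    ∃ σ : V → V, Function.Bijective σ ∧ ∀ v, G.Adj v (σ v) ∨ (σ v = v ∧ G.degree v < 5) := by
  let w : V → V → ℕ := fun v u =>
    (if G.Adj v u then 1 else 0) + (if v = u then 5 - G.degree v else 0)
  have hsymm : ∀ u v, w u v = w v u := by
    intro u v
    simp only [w, G.adj_comm u v]
    by_cases h : u = v
    · subst h; rfl
    · simp [h, Ne.symm h]
  have hrow : ∀ v, ∑ u, w v u = 5 := by
    intro v
    simp only [w, Finset.sum_add_distrib, Finset.sum_ite_eq, mem_univ, if_true]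
    have : ∑ u, (if G.Adj v u then 1 else 0) = G.degree v := by
      rw [← G.card_neighborFinset_eq_degree, Finset.sum_boole]
      simp [SimpleGraph.neighborFinset_eq_filter]
    rw [this]; have := hdeg v; omega
  let t : V → Finset V := fun v => univ.filter (fun u => w v u ≠ 0)
  have hall : ∀ s : Finset V, s.card ≤ (s.biUnion t).card := by
    intro s
    have h1 : ∑ v ∈ s, ∑ u ∈ s.biUnion t, w v u = 5 * s.card := by
      rw [Finset.sum_congr rfl (g := fun _ => 5)]
      · simp [mul_comm]
      · intro v hv
        rw [← hrow v]
        apply Finset.sum_subset (Finset.subset_univ _)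
        intro u _ hu
        by_contra h
        exact hu (Finset.mem_biUnion.2 ⟨v, hv, by simp [t, h]⟩)
    have h2 : ∑ v ∈ s, ∑ u ∈ s.biUnion t, w v u ≤ 5 * (s.biUnion t).card := by
      rw [Finset.sum_comm]
      calc _ ≤ ∑ u ∈ s.biUnion t, 5 := by
            apply Finset.sum_le_sum
            intro u _
            rw [← hrow u]
            simp only [hsymm u]
            exact Finset.sum_le_sum_of_subset (Finset.subset_univ _)
        _ = _ := by simp [mul_comm]
    omega
  obtain ⟨σ, hσ, hσt⟩ := (Finset.all_card_le_biUnion_card_iff_exists_injective t).1 hall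
  refine ⟨σ, Finite.injective_iff_bijective.1 hσ, fun v => ?_⟩
  have := hσt v
  simp only [t, w, mem_filter, mem_univ, true_and] at this
  by_cases h : G.Adj v (σ v)
  · exact Or.inl h
  · right
    by_cases h' : v = σ v
    · refine ⟨h'.symm, ?_⟩
      simp only [h, if_false, zero_add, ne_eq] at this
      rw [if_pos h'] at this
      omega
    · simp [h, h'] at this

open Classical in
lemma aux_matching {V : Type*} [Fintype V] (G : SimpleGraph V) (col : V → Bool)
    (hcol : ∀ u v, G.Adj u v → col u ≠ col v) (hdeg : ∀ v, G.degree v ≤ 5) :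
    ∃ M : Set (Sym2 V), M ⊆ G.edgeSet ∧
      (∀ e ∈ M, ∀ f ∈ M, ∀ v, v ∈ e → v ∈ f → e = f) ∧
      (∀ v, G.degree v = 5 → ∃ e ∈ M, v ∈ e) := by
  obtain ⟨σ, hσ, h⟩ := aux_perm G hdeg
  refine ⟨{e | ∃ v, col v = true ∧ G.Adj v (σ v) ∧ e = s(v, σ v)}, ?_, ?_, ?_⟩
  · rintro e ⟨v, -, hv, rfl⟩; exact hv
  · rintro e ⟨a, ha, haa, rfl⟩ f ⟨b, hb, hbb, rfl⟩ v hv hv'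
    have h1 := hcol _ _ haa
    have h2 := hcol _ _ hbb
    simp only [Sym2.mem_iff] at hv hv'
    rcases hv with rfl | rfl <;> rcases hv' with rfl | h3
    · rfl
    · rw [← h3] at h2; exact absurd (hb.trans ha.symm) h2
    · exact absurd (ha.trans hb.symm) h1
    · rw [hσ.1 h3]
  · intro v hv
    by_cases hc : col v = true
    · rcases h v with h | h
      · exact ⟨_, ⟨v, hc, h, rfl⟩, by simp⟩
      · omega
    · obtain ⟨u, rfl⟩ := hσ.2 v
      rcases h u with h | h
      · refine ⟨_, ⟨u, ?_, h, rfl⟩, by simp⟩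
        have := hcol _ _ h
        revert this hc; cases col u <;> cases col (σ u) <;> simp
      · rw [h.1] at hv; omega

open Classical in
lemma aux_count {V : Type*} [Fintype V] (G : SimpleGraph V) (M : Set (Sym2 V))
    (hM : M ⊆ G.edgeSet) (hdeg : ∀ v, G.degree v ≤ 5)
    (hcov : ∀ v, G.degree v = 5 → ∃ e ∈ M, v ∈ e) (v : V) :
    (univ.filter (fun e : Sym2 V => e ∈ G.edgeSet ∧ e ∉ M ∧ v ∈ e)).card ≤ 4 := by
  have hsub : univ.filter (fun e : Sym2 V => e ∈ G.edgeSet ∧ e ∉ M ∧ v ∈ e) ⊆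
      G.incidenceFinset v := by
    intro e
    simp only [mem_filter, mem_univ, true_and, SimpleGraph.mem_incidenceFinset]
    rintro ⟨h1, h2, h3⟩
    exact ⟨h1, h3⟩
  have hc := G.card_incidenceFinset_eq_degree v
  have hd := hdeg v
  by_cases h5 : G.degree v = 5
  · obtain ⟨e, he, hve⟩ := hcov v h5
    have : univ.filter (fun e : Sym2 V => e ∈ G.edgeSet ∧ e ∉ M ∧ v ∈ e) ⊂
        G.incidenceFinset v := by
      rw [Finset.ssubset_iff_of_subset hsub]
      refine ⟨e, ?_, by simp [he]⟩
      rw [SimpleGraph.mem_incidenceFinset]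
      exact ⟨hM he, hve⟩
    have := Finset.card_lt_card this
    omega
  · have := Finset.card_le_card hsub
    omega

lemma aux_index {V : Type*} (G : SimpleGraph V) (c : Sym2 V → ℕ)
    (hc : IsProperEdgeColoring G c) (P : Set (Set ℕ)) (hP : P.Finite)
    (h : ∀ v, palette G c v ∈ P) (n : ℕ) (hn : P.ncard ≤ n) : paletteIndex G ≤ n := by
  have h0 : paletteIndex G ≤ (Set.range (palette G c)).ncard := Nat.sInf_le ⟨c, hc, rfl⟩
  refine h0.trans (le_trans (Set.ncard_le_ncard ?_ hP) hn)
  rintro _ ⟨v, rfl⟩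
  exact h v

/-- If `G` is a bipartite graph with `Δ(G) = 5` and no isolated vertices, then
`š(G) ≤ 23`; moreover if `G` has a perfect matching, then `š(G) ≤ 12`. -/
theorem palette_index_bipartite_deg5 {V : Type*} [Fintype V]
    (G : SimpleGraph V) [DecidableRel G.Adj]
    (hbip : G.Colorable 2)
    (hiso : ∀ v : V, 0 < G.degree v)
    (hmax : G.maxDegree = 5) :
    paletteIndex G ≤ 23 ∧
      ((∃ M : G.Subgraph, M.IsPerfectMatching) → paletteIndex G ≤ 12) := by
  classical
  obtain ⟨C⟩ := hbip
  let col : V → Bool := fun v => decide (C v = 0)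
  have hcol : ∀ u v, G.Adj u v → col u ≠ col v := by
    intro u v huv h
    have := C.valid huv
    simp only [col, decide_eq_decide] at h
    revert this h
    generalize C u = a
    generalize C v = b
    revert a b
    decide
  have hdeg : ∀ v, G.degree v ≤ 5 := fun v => hmax ▸ G.degree_le_maxDegree v
  let P0' : Finset (Set ℕ) := (goodPal.erase ∅).image (fun s : Finset (Bool × Bool) => encC '' (s : Set (Bool × Bool)))
  let P1 : Finset (Set ℕ) := goodPal.image (fun s : Finset (Bool × Bool) => {0} ∪ encC '' (s : Set (Bool × Bool)))
  have hP1 : P1.card ≤ 12 := Finset.card_image_le.trans goodPal_card.le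
  have hP0' : P0'.card ≤ 11 := by
    refine Finset.card_image_le.trans ?_
    rw [Finset.card_erase_of_mem (by decide), goodPal_card]
  constructor
  · obtain ⟨M, hM, hMm, hMc⟩ := aux_matching G col hcol (by intro v; convert hdeg v)
    obtain ⟨c, hc, hp⟩ := aux_color G col hcol M hM hMm (by
      have := aux_count G M hM (by intro v; convert hdeg v) hMc
      intro v; convert this v)
    refine aux_index G c hc (P0' ∪ P1 : Finset (Set ℕ)) (Finset.finite_toSet _) ?_ _ ?_
    · intro v
      obtain ⟨s, hs, hsp⟩ := hp v
      rw [Finset.mem_coe, Finset.mem_union]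
      by_cases hv : ∃ e ∈ M, v ∈ e
      · right
        rw [if_pos hv] at hsp
        exact Finset.mem_image.2 ⟨s, hs, hsp.symm⟩
      · left
        rw [if_neg hv, Set.empty_union] at hsp
        refine Finset.mem_image.2 ⟨s, Finset.mem_erase.2 ⟨?_, hs⟩, hsp.symm⟩
        rintro rfl
        obtain ⟨u, hu⟩ := (G.degree_pos_iff_exists_adj v).1 (hiso v)
        have : c s(v, u) ∈ palette G c v := ⟨s(v, u), hu, by simp, rfl⟩
        rw [hsp] at this
        simp at this
    · rw [Set.ncard_coe_finset]
      refine (Finset.card_union_le _ _).trans ?_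
      omega
  · rintro ⟨N, hN⟩
    have hN' := SimpleGraph.Subgraph.isPerfectMatching_iff.1 hN
    have hcov : ∀ v, ∃ e ∈ N.edgeSet, v ∈ e := by
      intro v
      obtain ⟨u, hu, -⟩ := hN' v
      exact ⟨s(v, u), hu, by simp⟩
    have hM : N.edgeSet ⊆ G.edgeSet := N.edgeSet_subset
    obtain ⟨c, hc, hp⟩ := aux_color G col hcol N.edgeSet hM (by
      intro e he f hf v hve hvf
      obtain ⟨a, rfl⟩ := hve
      obtain ⟨b, rfl⟩ := hvf
      have hab : a = b := (hN' v).unique he hf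
      rw [hab]) (by
      have := aux_count G N.edgeSet hM (by intro v; convert hdeg v) (fun v _ => hcov v)
      intro v; convert this v)
    refine aux_index G c hc (P1 : Finset (Set ℕ)) (Finset.finite_toSet _) ?_ _ ?_
    · intro v
      obtain ⟨s, hs, hsp⟩ := hp v
      rw [if_pos (hcov v)] at hsp
      exact Finset.mem_image.2 ⟨s, hs, hsp.symm⟩
    · rw [Set.ncard_coe_finset]; exact hP1
end
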